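/- arXiv:2311.18786 — 3 statements merged into one kernel-verified Lean document; each statement's English description precedes it below -/
import Mathlib

section
/- Let t ∈ ℕ and let n ≥ 2t. Then every tree T on t vertices satisfies M_T(n) ≤ (1/8)·(t² + 6t + 60). -/
/-!
The bootstrap process of a tree `T` on `t` vertices quickly produces a small set that is completely
joined to the rest of the graph, and from then on few steps can be effective.

If the process is not stationary from the start, the graph at time `1` contains a copy of `T`. Peeling
leaves off `T` gives a vertex cover `A` of `T`, of size `s`, which is matched into its complement,
so that `2 s ≤ t` (`exists_peel_cover`, `Peel.exists_matching`). Moving the peeled leaves one after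
the other to arbitrary free vertices shows that, after `s` steps, the image of `A` is joined to
everything outside the copy. Repeating this with a second copy, which shares only the image of `A`
with the first and exists because `n ≥ 2 t`, shows that after `2 s` steps the image `B` of `A` is
joined to everything outside `B` (`exists_isCore`).

Let `d` be the least number of neighbours outside `A` of a vertex of `A`; counting edges of the
forest between `A` and its complement gives `s d ≤ t - 1`. A vertex outside `B` with at least
`d - 1` neighbours outside `B` is joined to all other vertices in the next step, since it can play
the role of a vertex of `A` attaining `d` (`mem_outerUniv_bootStep`). Conversely, a step that adds
an edge not inside `B` uses a copy of `T`, and an edge count in this copy exhibits a vertex outside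
`B`, not universal before, which now has `d - 1` neighbours outside `B` (`exists_outer_deg`). Hence
every effective step either adds one of the at most `s.choose 2` edges inside `B` or leads, within
two steps, to a new universal vertex outside `B`. After `d - 1` such vertices have appeared, one
more step makes all vertices outside `B` universal, and then only edges inside `B` can be added
(`exists_stuck`).

Altogether the running time is at most
`1 + 2 s + s.choose 2 + 2 (d - 1) + 1 = 2 s + 2 d + s.choose 2`,
and with `2 s ≤ t` and `s d ≤ t - 1` this is at most `(t ^ 2 + 6 t + 60) / 8`.
-/

open SimpleGraph

/-- The number of subgraphs of `G` isomorphic to `H`. -/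
noncomputable def numCopies {α β : Type*} (H : SimpleGraph α) (G : SimpleGraph β) : ℕ :=
  {G' : G.Subgraph | Nonempty (G'.coe ≃g H)}.ncard

/-- One step of the `H`-bootstrap process: add every missing edge whose addition
creates a new copy of `H`. -/
noncomputable def bootStep {α β : Type*} (H : SimpleGraph α) (G : SimpleGraph β) :
    SimpleGraph β :=
  G ⊔ SimpleGraph.fromRel (fun u v =>
    numCopies H G < numCopies H (G ⊔ SimpleGraph.fromEdgeSet {s(u, v)}))

/-- The `H`-bootstrap process `(G_i)_{i ≥ 0}` on the starting graph `G`. -/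
noncomputable def bootProcess {α β : Type*} (H : SimpleGraph α) (G : SimpleGraph β) :
    ℕ → SimpleGraph β
  | 0 => G
  | i + 1 => bootStep H (bootProcess H G i)

/-- The running time `τ_H(G)` of the `H`-bootstrap process on `G`. -/
noncomputable def runningTime {α β : Type*} (H : SimpleGraph α) (G : SimpleGraph β) : ℕ :=
  sInf {t | bootProcess H G t = bootProcess H G (t + 1)}

/-- `M_H(n)`, the maximum running time of the `H`-bootstrap process over all
`n`-vertex starting graphs. -/
noncomputable def maxRunningTime {α : Type*} (H : SimpleGraph α) (n : ℕ) : ℕ :=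
  sSup {t | ∃ G : SimpleGraph (Fin n), runningTime H G = t}

/-! ### Copies of `H` and steps of the process -/

/-- A finite forest with an edge has a leaf `x`, with unique neighbour `q`: take an end of a
longest path. -/
theorem exists_leaf {V : Type*} [Finite V] {F : SimpleGraph V} (hF : F.IsAcyclic)
    {a b : V} (hab : F.Adj a b) :
    ∃ x q, F.Adj x q ∧ ∀ y, F.Adj x y → y = q := by
  classical
  have : Nonempty V := ⟨a⟩
  have := Fintype.ofFinite V
  obtain ⟨u, v, p, hp, hmax⟩ := Walk.exists_isPath_forall_isPath_length_le_length F
  have h1 := hmax _ _ (Walk.cons hab Walk.nil) (by simp [hab.ne])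
  have hnil : ¬ p.Nil := by
    intro h
    rw [← Walk.length_eq_zero_iff] at h
    simp at h1
    omega
  refine ⟨u, p.snd, p.adj_snd hnil, fun y hy => ?_⟩
  by_cases hs : y ∈ p.support
  · exact hF.eq_snd_of_adj_start hp hy hs
  · have := hmax _ _ (Walk.cons hy.symm p) (by simp [hp, hs])
    simp at this

/-- If an injection `g` maps every edge of `H` other than `ab` to an edge of `G`, then one step
makes `g a` and `g b` adjacent: either they were already, or adding this edge creates the copy
`g(H)` while keeping all old ones. -/
theorem bootStep_adj_of_copy {α β : Type*} [Finite β] {H : SimpleGraph α}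
    {G : SimpleGraph β} {g : α → β} (hg : Function.Injective g) {a b : α}
    (hab : H.Adj a b)
    (h : ∀ x y, H.Adj x y → (x = a ∧ y = b) ∨ (x = b ∧ y = a) ∨ G.Adj (g x) (g y)) :
    (bootStep H G).Adj (g a) (g b) := by
  classical
  by_cases hG : G.Adj (g a) (g b)
  · exact Or.inl hG
  right
  have hne : g a ≠ g b := hg.ne hab.ne
  rw [SimpleGraph.fromRel_adj]
  refine ⟨hne, Or.inl ?_⟩
  set G' := G ⊔ SimpleGraph.fromEdgeSet {s(g a, g b)} with hG'
  have hle : G ≤ G' := le_sup_left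
  let c : Copy H G' := ⟨⟨g, by
    intro x y hxy
    rcases h x y hxy with ⟨rfl, rfl⟩ | ⟨rfl, rfl⟩ | h
    · right; simp [hne]
    · right; simp [hne.symm, Sym2.eq_swap]
    · exact Or.inl h⟩, hg⟩
  let ι : Copy G G' := Copy.ofLE G G' hle
  have hinj : Function.Injective (Subgraph.map ι.toHom) := by
    intro A B hAB
    have hv : (A.map ι.toHom).verts = (B.map ι.toHom).verts := by rw [hAB]
    have he : (A.map ι.toHom).Adj = (B.map ι.toHom).Adj := by rw [hAB]
    ext x y
    · have := congrArg (fun s => x ∈ s) hv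
      simpa [ι, Copy.ofLE] using this
    · have := congrFun (congrFun he x) y
      simpa [ι, Copy.ofLE, Relation.map_apply] using this
  unfold numCopies
  rw [← Set.ncard_image_of_injective _ hinj]
  apply Set.ncard_lt_ncard _ (Set.toFinite _)
  rw [Set.ssubset_iff_of_subset]
  · refine ⟨c.toSubgraph, ⟨c.isoToSubgraph.symm⟩, ?_⟩
    rintro ⟨A, -, hA⟩
    have h1 : c.toSubgraph.Adj (g a) (g b) := by
      simp only [Copy.toSubgraph, Subgraph.map_adj]
      exact ⟨a, b, hab, rfl, rfl⟩
    rw [← hA] at h1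
    simp only [Subgraph.map_adj] at h1
    obtain ⟨x, y, hxy, hx, hy⟩ := h1
    simp only [ι, Copy.ofLE] at hx hy
    apply hG
    rw [← hx, ← hy]
    exact A.adj_sub hxy
  · rintro _ ⟨A, ⟨e⟩, rfl⟩
    exact ⟨(ι.isoSubgraphMap A).symm.trans e⟩

/-- Every edge added in a step is the image of an edge of `H` under an injective homomorphism
from `H` to the graph after the step. If no copy of `H` in `G + uv` used the edge `uv`, then all
these copies would already lie in `G`, so adding `uv` would not raise the number of copies. -/
theorem exists_copy_of_bootStep_adj {α β : Type*} [Finite β] {H : SimpleGraph α}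
    {G : SimpleGraph β} {u v : β} (huv : (bootStep H G).Adj u v) (hG : ¬ G.Adj u v) :
    ∃ g : α → β, Function.Injective g ∧ (∀ x y, H.Adj x y → (bootStep H G).Adj (g x) (g y)) ∧
      ∃ a b, H.Adj a b ∧ g a = u ∧ g b = v := by
  classical
  have hstep := huv
  rcases huv with h | h
  · exact absurd h hG
  rw [SimpleGraph.fromRel_adj] at h
  obtain ⟨hne, h⟩ := h
  have h : numCopies H G < numCopies H (G ⊔ SimpleGraph.fromEdgeSet {s(u, v)}) := by
    rcases h with h | h
    · exact h
    · rwa [Sym2.eq_swap]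
  set G' := G ⊔ SimpleGraph.fromEdgeSet {s(u, v)} with hG'
  have hle : G ≤ G' := le_sup_left
  let ι : Copy G G' := Copy.ofLE G G' hle
  have hadj : ∀ x y, G'.Adj x y → (bootStep H G).Adj x y := by
    intro x y hxy
    rcases hxy with hxy | hxy
    · exact Or.inl hxy
    · simp only [fromEdgeSet_adj, Set.mem_singleton_iff, Sym2.eq_iff] at hxy
      rcases hxy.1 with ⟨rfl, rfl⟩ | ⟨rfl, rfl⟩
      · exact hstep
      · exact hstep.symm
  have key : ∃ A : G'.Subgraph, Nonempty (A.coe ≃g H) ∧ A.Adj u v := by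
    by_contra! hcon
    refine absurd h (not_lt.2 ?_)
    unfold numCopies
    refine (Set.ncard_le_ncard ?_ (Set.toFinite _)).trans
      (Set.ncard_image_le (f := Subgraph.map ι.toHom) (Set.toFinite _))
    rintro A ⟨e⟩
    have hA := hcon A ⟨e⟩
    let B : G.Subgraph :=
      { verts := A.verts
        Adj := A.Adj
        adj_sub := by
          intro x y hxy
          rcases A.adj_sub hxy with h | h
          · exact h
          · simp only [fromEdgeSet_adj, Set.mem_singleton_iff, Sym2.eq_iff] at h
            rcases h.1 with ⟨rfl, rfl⟩ | ⟨rfl, rfl⟩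
            · exact absurd hxy hA
            · exact absurd hxy.symm hA
        edge_vert := A.edge_vert
        symm := A.symm }
    have hBA : B.map ι.toHom = A := by
      ext x y
      · simp [ι, Copy.ofLE, B]
      · simp [ι, Copy.ofLE, B, Relation.map_apply]
    refine ⟨B, ⟨?_⟩, hBA⟩
    refine (ι.isoSubgraphMap B).trans ?_
    rw [hBA]
    exact e
  obtain ⟨A, ⟨e⟩, hA⟩ := key
  refine ⟨fun x => (e.symm x : β), fun x y hxy => e.symm.injective (Subtype.ext hxy), ?_,
    e ⟨u, A.edge_vert hA⟩, e ⟨v, A.edge_vert hA.symm⟩, ?_, by simp, by simp⟩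
  · intro x y hxy
    exact hadj _ _ (A.adj_sub (e.symm.map_rel_iff.2 hxy))
  · exact e.map_rel_iff.2 hA

/-! ### Forests, extensions of injections, and peeled vertex covers -/

/-- A forest has fewer edges than vertices, applied to the bipartite subgraph between two disjoint
sets `P` and `Q`. -/
theorem sum_card_adj_lt {α : Type*} [Fintype α] [DecidableEq α] {T : SimpleGraph α}
    [DecidableRel T.Adj] (hT : T.IsAcyclic) (P Q : Finset α) (hd : Disjoint P Q)
    (hP : P.Nonempty) :
    ∑ p ∈ P, (Q.filter (T.Adj p)).card + 1 ≤ P.card + Q.card := by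
  induction hN : P.card + Q.card using Nat.strong_induction_on generalizing P Q with
  | _ N ih =>
  subst hN
  let F : SimpleGraph α :=
    { Adj := fun x y => T.Adj x y ∧ ((x ∈ P ∧ y ∈ Q) ∨ (x ∈ Q ∧ y ∈ P))
      symm := ⟨fun x y h => ⟨h.1.symm, h.2.symm.imp And.symm And.symm⟩⟩
      loopless := ⟨fun x h => T.irrefl h.1⟩ }
  have hF : F.IsAcyclic := hT.anti (fun x y h => h.1)
  have hpos := hP.card_pos
  by_cases hE : ∃ a b, F.Adj a b
  · obtain ⟨a, b, hab⟩ := hE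
    obtain ⟨x, q, hxq, huniq⟩ := exists_leaf hF hab
    rcases hxq.2 with ⟨hx, hq⟩ | ⟨hx, hq⟩
    · have h1 : (Q.filter (T.Adj x)).card ≤ 1 := by
        rw [Finset.card_le_one]
        intro u hu v hv
        rw [Finset.mem_filter] at hu hv
        rw [huniq u ⟨hu.2, Or.inl ⟨hx, hu.1⟩⟩, huniq v ⟨hv.2, Or.inl ⟨hx, hv.1⟩⟩]
      have hQ : 0 < Q.card := Finset.card_pos.2 ⟨q, hq⟩
      have hce := Finset.card_erase_add_one hx
      rw [← Finset.sum_erase_add _ _ hx]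
      rcases (P.erase x).eq_empty_or_nonempty with he | he
      · rw [he]; simp only [Finset.sum_empty]; omega
      · have := ih _ (by omega) (P.erase x) Q (hd.mono_left (Finset.erase_subset _ _)) he rfl
        omega
    · have hce := Finset.card_erase_add_one hx
      have := ih _ (by omega) P (Q.erase x) (hd.mono_right (Finset.erase_subset _ _)) hP rfl
      -- erasing the leaf `x ∈ Q` loses only its one edge, to `q`
      have h2 : ∀ p ∈ P, (Q.filter (T.Adj p)).card ≤
          ((Q.erase x).filter (T.Adj p)).card + (if p = q then 1 else 0) := by
        intro p hp
        split_ifs with hpq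
        · calc (Q.filter (T.Adj p)).card
              ≤ (insert x ((Q.erase x).filter (T.Adj p))).card := by
                apply Finset.card_le_card
                intro y hy
                simp only [Finset.mem_insert, Finset.mem_filter, Finset.mem_erase] at hy ⊢
                tauto
            _ ≤ _ := Finset.card_insert_le _ _
        · apply Finset.card_le_card
          intro y hy
          simp only [Finset.mem_filter, Finset.mem_erase] at hy ⊢
          refine ⟨⟨?_, hy.1⟩, hy.2⟩
          rintro rfl
          exact hpq (huniq p ⟨hy.2.symm, Or.inr ⟨hx, hp⟩⟩)
      have h3 := Finset.sum_le_sum h2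
      rw [Finset.sum_add_distrib, Finset.sum_ite_eq' P q, if_pos hq] at h3
      omega
  · have h0 : ∑ p ∈ P, (Q.filter (T.Adj p)).card = 0 := by
      apply Finset.sum_eq_zero
      intro p hp
      rw [Finset.card_eq_zero, Finset.filter_eq_empty_iff]
      intro y hy h
      exact hE ⟨p, y, h, Or.inl ⟨hp, hy⟩⟩
    omega

/-- An injective map on `P` extends to an injective map on `P ∪ Q` sending `Q` into a prescribed
set `W` that is large enough and avoids the image of `P`. -/
theorem exists_extend_injOn {α β : Type*} [DecidableEq α] (g : α → β) (P Q : Finset α)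
    (W : Finset β) (hP : Set.InjOn g P) (hd : Disjoint P Q) (hW : ∀ p ∈ P, g p ∉ W)
    (hc : Q.card ≤ W.card) :
    ∃ g' : α → β, (∀ p ∈ P, g' p = g p) ∧ (∀ q ∈ Q, g' q ∈ W) ∧
      Set.InjOn g' ↑(P ∪ Q) := by
  obtain ⟨e⟩ := Function.Embedding.nonempty_of_card_le (α := Q) (β := W) (by simpa using hc)
  have hPQ : ∀ p ∈ P, p ∉ Q := fun p hp hq => Finset.disjoint_left.1 hd hp hq
  refine ⟨fun x => if h : x ∈ Q then (e ⟨x, h⟩ : β) else g x, ?_, ?_, ?_⟩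
  · intro p hp
    simp [hPQ p hp]
  · intro q hq
    simp [hq]
  · intro x hx y hy hxy
    rw [Finset.coe_union] at hx hy
    by_cases h1 : x ∈ Q <;> by_cases h2 : y ∈ Q
    · simp only [h1, h2, dif_pos] at hxy
      simpa using e.injective (Subtype.ext hxy)
    · have hy' : y ∈ P := by simpa [h2] using hy
      simp only [h1, h2, dif_pos, dif_neg, not_false_eq_true] at hxy
      exact absurd (hxy ▸ (e ⟨x, h1⟩).2) (hW y hy')
    · have hx' : x ∈ P := by simpa [h1] using hx
      simp only [h1, h2, dif_pos, dif_neg, not_false_eq_true] at hxy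
      exact absurd (hxy ▸ (e ⟨y, h2⟩).2) (hW x hx')
    · have hx' : x ∈ P := by simpa [h1] using hx
      have hy' : y ∈ P := by simpa [h2] using hy
      simp only [h1, h2, dif_neg, not_false_eq_true] at hxy
      exact hP hx' hy' hxy

/-- The sets obtained from `∅` by repeatedly choosing a leaf `x` of the forest induced on the
complement and adding its unique neighbour `q` there. The leaf `x` itself is not added; it stays
outside, isolated in the complement from then on. -/
inductive Peel {α : Type*} [DecidableEq α] (T : SimpleGraph α) : Finset α → Prop
  | empty : Peel T ∅
  | insert {A : Finset α} {x q : α} : Peel T A → x ∉ A → q ∉ A → T.Adj x q →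
      (∀ y, T.Adj x y → y = q ∨ y ∈ A) → Peel T (insert q A)

/-- In a forest some peeled set is a vertex cover: if a peeled set misses an edge, the forest
induced on its complement has a leaf, so a larger peeled set exists. -/
theorem exists_peel_cover {α : Type*} [Fintype α] [DecidableEq α] {T : SimpleGraph α}
    (hT : T.IsAcyclic) : ∃ A, Peel T A ∧ ∀ x y, T.Adj x y → x ∈ A ∨ y ∈ A := by
  classical
  obtain ⟨A, hA, hmax⟩ := Finset.exists_max_image (Finset.univ.filter (Peel T)) Finset.card
    ⟨∅, by simp [Peel.empty]⟩
  simp only [Finset.mem_filter, Finset.mem_univ, true_and] at hA hmax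
  refine ⟨A, hA, ?_⟩
  by_contra! hcon
  obtain ⟨a, b, hab, ha, hb⟩ := hcon
  let F : SimpleGraph α :=
    { Adj := fun x y => T.Adj x y ∧ x ∉ A ∧ y ∉ A
      symm := ⟨fun x y h => ⟨h.1.symm, h.2.symm⟩⟩
      loopless := ⟨fun x h => T.irrefl h.1⟩ }
  have hF : F.IsAcyclic := hT.anti (fun x y h => h.1)
  obtain ⟨x, q, hxq, huniq⟩ := exists_leaf hF (show F.Adj a b from ⟨hab, ha, hb⟩)
  have := hmax _ (hA.insert hxq.2.1 hxq.2.2 hxq.1 (fun y hy => by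
    by_cases h : y ∈ A
    · exact Or.inr h
    · exact Or.inl (huniq y ⟨hy, hxq.2.1, h⟩)))
  rw [Finset.card_insert_of_notMem hxq.2.2] at this
  omega

/-- The leaves used in the peeling match a peeled set injectively into its complement, so it
occupies at most half of the vertices. The last clause, that the neighbours of `m a` lie in `A`,
keeps the leaves distinct along the induction. -/
theorem Peel.exists_matching {α : Type*} [DecidableEq α] {T : SimpleGraph α} {A : Finset α}
    (hA : Peel T A) : ∃ m : α → α, Set.InjOn m A ∧
      ∀ a ∈ A, m a ∉ A ∧ T.Adj a (m a) ∧ ∀ y, T.Adj (m a) y → y ∈ A := by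
  induction hA with
  | empty => exact ⟨id, by simp, by simp⟩
  | @insert A x q _ hx hq hxq hN ih =>
    obtain ⟨m, hinj, hm⟩ := ih
    have hmx : ∀ a ∈ A, m a ≠ x := fun a ha h => hq ((hm a ha).2.2 q (h ▸ hxq))
    have hmq : ∀ a ∈ A, m a ≠ q := fun a ha h => hx ((hm a ha).2.2 x (h ▸ hxq.symm))
    have hne : ∀ a ∈ A, a ≠ q := fun a ha h => hq (h ▸ ha)
    refine ⟨Function.update m q x, ?_, ?_⟩
    · intro a ha b hb hab
      simp only [Finset.coe_insert, Set.mem_insert_iff, Finset.mem_coe] at ha hb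
      rcases ha with rfl | ha <;> rcases hb with rfl | hb
      · rfl
      · rw [Function.update_self, Function.update_of_ne (hne b hb)] at hab
        exact absurd hab.symm (hmx b hb)
      · rw [Function.update_self, Function.update_of_ne (hne a ha)] at hab
        exact absurd hab (hmx a ha)
      · rw [Function.update_of_ne (hne a ha), Function.update_of_ne (hne b hb)] at hab
        exact hinj ha hb hab
    · intro a ha
      rcases Finset.mem_insert.1 ha with rfl | ha
      · rw [Function.update_self]
        refine ⟨by simp [hx, hxq.ne], hxq.symm, fun y hy => ?_⟩
        exact Finset.mem_insert.2 (hN y hy)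
      · rw [Function.update_of_ne (hne a ha)]
        refine ⟨by simp [hmq a ha, (hm a ha).1], (hm a ha).2.1, fun y hy => ?_⟩
        exact Finset.mem_insert_of_mem ((hm a ha).2.2 y hy)

/-! ### From one copy of the tree to a core -/

theorem le_bootStep {α β : Type*} (H : SimpleGraph α) (G : SimpleGraph β) :
    G ≤ bootStep H G := le_sup_left

theorem bootProcess_mono {α β : Type*} (H : SimpleGraph α) (G : SimpleGraph β) :
    Monotone (bootProcess H G) :=
  monotone_nat_of_le_succ fun i => le_bootStep H (bootProcess H G i)

/-- If `f` embeds `T` at time `i`, then `#A` steps later every vertex of `f(A)` is adjacent to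
everything outside the range of `f`. When `q` is added to `A` through the leaf `x`, the neighbours
of `x` other than `q` are in `A`, so moving `f x` to `w` keeps every edge except `qx`; the edge from
`f q` to `w` therefore appears one step later. -/
theorem peel_adj {α β : Type*} [DecidableEq α] [Finite β] {T : SimpleGraph α}
    {G : SimpleGraph β} {i : ℕ} {f : α → β} (hf : Function.Injective f)
    (hom : ∀ x y, T.Adj x y → (bootProcess T G i).Adj (f x) (f y))
    {A : Finset α} (hA : Peel T A) :
    ∀ p ∈ A, ∀ w ∉ Set.range f, (bootProcess T G (i + A.card)).Adj (f p) w := by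
  induction hA with
  | empty => simp
  | @insert A x q _ hx hq hxq hN ih =>
    intro p hp w hw
    rw [Finset.card_insert_of_notMem hq, ← add_assoc]
    rcases Finset.mem_insert.1 hp with rfl | hp
    · -- the image of the leaf `x` is moved to `w`
      have hg : Function.Injective (Function.update f x w) := by
        intro y z hyz
        by_cases h1 : y = x <;> by_cases h2 : z = x
        · rw [h1, h2]
        · subst h1
          rw [Function.update_self, Function.update_of_ne h2] at hyz
          exact absurd ⟨z, hyz.symm⟩ hw
        · subst h2
          rw [Function.update_self, Function.update_of_ne h1] at hyz
          exact absurd ⟨y, hyz⟩ hw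
        · rw [Function.update_of_ne h1, Function.update_of_ne h2] at hyz
          exact hf hyz
      have := bootStep_adj_of_copy (H := T) (G := bootProcess T G (i + A.card)) hg hxq.symm ?_
      · rwa [Function.update_of_ne hxq.symm.ne, Function.update_self] at this
      · intro y z hyz
        by_cases h1 : y = x
        · subst h1
          rcases hN z hyz with rfl | hz
          · exact Or.inr (Or.inl ⟨rfl, rfl⟩)
          · right; right
            rw [Function.update_self, Function.update_of_ne hyz.symm.ne]
            exact (ih z hz w hw).symm
        · by_cases h2 : z = x
          · subst h2
            rcases hN y hyz.symm with rfl | hy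
            · exact Or.inl ⟨rfl, rfl⟩
            · right; right
              rw [Function.update_self, Function.update_of_ne h1]
              exact ih y hy w hw
          · right; right
            rw [Function.update_of_ne h1, Function.update_of_ne h2]
            exact bootProcess_mono T G (Nat.le_add_right _ _) (hom y z hyz)
    · exact le_bootStep _ _ (ih p hp w hw)

/-- `f` places the set `A` injectively in `G`, preserving the edges of `T` inside `A`, in such a way
that every vertex of `f(A)` is adjacent to every vertex outside `f(A)`. If `A` is a vertex cover of
`T`, then any injective extension of `f` that sends the complement of `A` outside `f(A)` embeds
`T` in `G`. -/
structure IsCore {α β : Type*} [DecidableEq β] (T : SimpleGraph α) (A : Finset α) (f : α → β)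
    (G : SimpleGraph β) : Prop where
  injOn : Set.InjOn f A
  adj_core : ∀ x ∈ A, ∀ y ∈ A, T.Adj x y → G.Adj (f x) (f y)
  adj_outer : ∀ b ∈ A.image f, ∀ w ∉ A.image f, G.Adj b w

theorem IsCore.mono {α β : Type*} [DecidableEq β] {T : SimpleGraph α} {A : Finset α}
    {f : α → β} {G G' : SimpleGraph β} (h : IsCore T A f G) (hG : G ≤ G') : IsCore T A f G' :=
  ⟨h.injOn, fun x hx y hy hxy => hG (h.adj_core x hx y hy hxy),
    fun b hb w hw => hG (h.adj_outer b hb w hw)⟩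

/-- The image of a peeled vertex cover becomes a core `2 * #A` steps after a copy of `T` is
present. After `#A` steps `f(A)` is complete to the complement of the range of `f`, so `T` also has
an embedding `g` that agrees with `f` on `A` and avoids the range of `f` elsewhere. Applying
`peel_adj` to `g` gives the missing pairs between `f(A)` and the rest of the range of `f`. -/
theorem exists_isCore {α β : Type*} [Fintype α] [DecidableEq α] [Fintype β] [DecidableEq β]
    {T : SimpleGraph α} {G : SimpleGraph β} {i : ℕ} {f : α → β} (hf : Function.Injective f)
    (hom : ∀ x y, T.Adj x y → (bootProcess T G i).Adj (f x) (f y))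
    {A : Finset α} (hA : Peel T A) (hcov : ∀ x y, T.Adj x y → x ∈ A ∨ y ∈ A)
    (hcard : 2 * Fintype.card α ≤ Fintype.card β) :
    IsCore T A f (bootProcess T G (i + A.card + A.card)) := by
  have h1 := peel_adj hf hom hA
  obtain ⟨g, hgA, hgc, hgi⟩ := exists_extend_injOn f A Aᶜ (Finset.univ.image f)ᶜ hf.injOn
    disjoint_compl_right (by simp) (by
      rw [Finset.card_compl, Finset.card_compl, Finset.card_image_of_injective _ hf,
        Finset.card_univ]
      omega)
  have hgi' : Function.Injective g := by simpa [Set.injOn_univ] using hgi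
  have hout : ∀ q, q ∉ A → g q ∉ Set.range f := by
    intro q hq
    simpa using hgc q (Finset.mem_compl.2 hq)
  have hmono : ∀ {x y}, (bootProcess T G (i + A.card)).Adj x y →
      (bootProcess T G (i + A.card + A.card)).Adj x y :=
    fun h => bootProcess_mono T G (Nat.le_add_right _ _) h
  have h2 := peel_adj hgi' (i := i + A.card) (G := G) (T := T) (by
    intro x y hxy
    by_cases hx : x ∈ A <;> by_cases hy : y ∈ A
    · rw [hgA x hx, hgA y hy]
      exact bootProcess_mono T G (Nat.le_add_right _ _) (hom x y hxy)
    · rw [hgA x hx]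
      exact h1 x hx _ (hout y hy)
    · rw [hgA y hy]
      exact (h1 y hy _ (hout x hx)).symm
    · exact absurd (hcov x y hxy) (by tauto)) hA
  refine ⟨hf.injOn, ?_, ?_⟩
  · intro x _ y _ hxy
    exact bootProcess_mono T G (by omega) (hom x y hxy)
  · intro b hb w hw
    obtain ⟨a, ha, rfl⟩ := Finset.mem_image.1 hb
    by_cases hwf : w ∈ Set.range f
    · rw [← hgA a ha]
      apply h2 a ha
      rintro ⟨z, rfl⟩
      by_cases hz : z ∈ A
      · exact hw (Finset.mem_image.2 ⟨z, hz, (hgA z hz).symm⟩)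
      · exact hout z hz hwf
    · exact hmono (h1 a ha w hwf)

/-! ### Vertices adjacent to everything outside the core -/

open Classical in
/-- The neighbours of `y` in `G` that lie outside `B`. -/
noncomputable def outerNbrs {β : Type*} [Fintype β] (G : SimpleGraph β) (B : Finset β) (y : β) :
    Finset β :=
  Finset.univ.filter fun w => G.Adj y w ∧ w ∉ B

open Classical in
/-- The outer universal vertices: those outside `B` adjacent to every other vertex outside `B`. -/
noncomputable def outerUniv {β : Type*} [Fintype β] (G : SimpleGraph β) (B : Finset β) :
    Finset β :=
  Finset.univ.filter fun y => y ∉ B ∧ ∀ w, w ∉ B → w ≠ y → G.Adj y w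

theorem mem_outerNbrs {β : Type*} [Fintype β] {G : SimpleGraph β} {B : Finset β} {y w : β} :
    w ∈ outerNbrs G B y ↔ G.Adj y w ∧ w ∉ B := by
  simp [outerNbrs]

theorem mem_outerUniv {β : Type*} [Fintype β] {G : SimpleGraph β} {B : Finset β} {y : β} :
    y ∈ outerUniv G B ↔ y ∉ B ∧ ∀ w, w ∉ B → w ≠ y → G.Adj y w := by
  simp [outerUniv]

theorem outerUniv_mono {β : Type*} [Fintype β] {G G' : SimpleGraph β} (h : G ≤ G')
    (B : Finset β) : outerUniv G B ⊆ outerUniv G' B := by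
  intro y hy
  rw [mem_outerUniv] at hy ⊢
  exact ⟨hy.1, fun w hw hne => h (hy.2 w hw hne)⟩

/-- A vertex `y` outside the core with at least `d - 1` outer neighbours, where `d` is the number of
outer neighbours of some `a ∈ A`, is outer universal after one step. For a target `v`, embed `T`
with `a` moved to `y`, one outer neighbour `l` of `a` at `v`, the other `d - 1` at neighbours of
`y`, and the remaining vertices outside `A` anywhere outside the core. Only the edge `yv` can be
missing. -/
theorem mem_outerUniv_bootStep {α β : Type*} [Fintype α] [DecidableEq α] [Fintype β]
    [DecidableEq β] {T : SimpleGraph α} {A : Finset α} {f : α → β} {G : SimpleGraph β}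
    (hcore : IsCore T A f G) (hcov : ∀ x y, T.Adj x y → x ∈ A ∨ y ∈ A)
    (hcard : Fintype.card α + 1 ≤ Fintype.card β)
    {a l : α} (ha : a ∈ A) (hl : l ∉ A) (hal : T.Adj a l) {y : β} (hy : y ∉ A.image f)
    (hdeg : (outerNbrs T A a).card ≤ (outerNbrs G (A.image f) y).card + 1) :
    y ∈ outerUniv (bootStep T G) (A.image f) := by
  rw [mem_outerUniv]
  refine ⟨hy, fun v hv hvy => ?_⟩
  by_cases hG : G.Adj y v
  · exact le_bootStep _ _ hG
  set B := A.image f with hB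
  have hBcard : B.card = A.card := Finset.card_image_of_injOn hcore.injOn
  have hmemB : ∀ x ∈ A, f x ∈ B := fun x hx => Finset.mem_image_of_mem f hx
  have hlN : l ∈ outerNbrs T A a := mem_outerNbrs.2 ⟨hal, hl⟩
  set N' := (outerNbrs T A a).erase l with hN'
  have hN'card : N'.card + 1 = (outerNbrs T A a).card := Finset.card_erase_add_one hlN
  obtain ⟨M, hM, hMcard⟩ := Finset.exists_subset_card_eq
    (show N'.card ≤ (outerNbrs G B y).card by omega)
  have hMadj : ∀ w ∈ M, G.Adj y w ∧ w ∉ B := fun w hw => mem_outerNbrs.1 (hM hw)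
  have hvM : v ∉ M := fun h => hG (hMadj v h).1
  have hyM : y ∉ M := fun h => G.irrefl (hMadj y h).1
  have hN'A : ∀ z ∈ N', z ∉ A ∧ z ≠ l ∧ z ≠ a := by
    intro z hz
    rw [hN', Finset.mem_erase, mem_outerNbrs] at hz
    exact ⟨hz.2.2, hz.1, hz.2.1.symm.ne⟩
  have hal' : a ≠ l := hal.ne
  -- the placement of `A` with `a` moved to `y`, and `l` placed at `v`
  let g₀ : α → β := Function.update (Function.update f a y) l v
  have hg₀l : g₀ l = v := Function.update_self _ _ _
  have hg₀a : g₀ a = y := by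
    simp only [g₀]
    rw [Function.update_of_ne hal', Function.update_self]
  have hg₀A : ∀ x ∈ A, x ≠ a → g₀ x = f x := by
    intro x hx hxa
    simp only [g₀]
    rw [Function.update_of_ne (by rintro rfl; exact hl hx), Function.update_of_ne hxa]
  have hg₀inj : Set.InjOn g₀ ↑(insert l A) := by
    intro x hx z hz hxz
    simp only [Finset.coe_insert, Set.mem_insert_iff, Finset.mem_coe] at hx hz
    have key : ∀ x, x = l ∨ x ∈ A → x = l ∨ x = a ∨ (x ∈ A ∧ x ≠ a) := by tauto
    rcases key x hx with rfl | rfl | ⟨hx', hxa⟩ <;> rcases key z hz with rfl | rfl | ⟨hz', hza⟩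
    · rfl
    · rw [hg₀l, hg₀a] at hxz; exact absurd hxz hvy
    · rw [hg₀l, hg₀A z hz' hza] at hxz; exact absurd (hxz ▸ hmemB z hz') hv
    · rw [hg₀l, hg₀a] at hxz; exact absurd hxz.symm hvy
    · rfl
    · rw [hg₀a, hg₀A z hz' hza] at hxz; exact absurd (hxz ▸ hmemB z hz') hy
    · rw [hg₀l, hg₀A x hx' hxa] at hxz; exact absurd (hxz ▸ hmemB x hx') hv
    · rw [hg₀a, hg₀A x hx' hxa] at hxz; exact absurd (hxz ▸ hmemB x hx') hy
    · rw [hg₀A x hx' hxa, hg₀A z hz' hza] at hxz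
      exact hcore.injOn hx' hz' hxz
  have hg₀cases : ∀ p ∈ insert l A, g₀ p = v ∨ g₀ p = y ∨ g₀ p ∈ B := by
    intro p hp
    rcases Finset.mem_insert.1 hp with rfl | hp
    · exact Or.inl hg₀l
    · by_cases hpa : p = a
      · subst hpa; exact Or.inr (Or.inl hg₀a)
      · rw [hg₀A p hp hpa]; exact Or.inr (Or.inr (hmemB p hp))
  obtain ⟨g₁, hg₁P, hg₁N, hg₁i⟩ := exists_extend_injOn g₀ (insert l A) N' M hg₀inj
    (by
      rw [Finset.disjoint_right]
      intro z hz
      simp [hN'A z hz])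
    (by
      intro p hp hpM
      rcases hg₀cases p hp with h | h | h
      · exact hvM (h ▸ hpM)
      · exact hyM (h ▸ hpM)
      · exact (hMadj _ hpM).2 h) hMcard.ge
  have hg₁cases : ∀ p ∈ insert l A ∪ N', g₁ p ∈ insert v (insert y (B ∪ M)) := by
    intro p hp
    rcases Finset.mem_union.1 hp with hp | hp
    · rw [hg₁P p hp]
      rcases hg₀cases p hp with h | h | h <;> simp [h]
    · simp [hg₁N p hp]
  have hdisj : Disjoint (insert l A) N' := by
    rw [Finset.disjoint_right]
    intro z hz
    simp [hN'A z hz]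
  obtain ⟨g, hgP, hgR, hgi⟩ := exists_extend_injOn g₁ (insert l A ∪ N') (insert l A ∪ N')ᶜ
    (insert v (insert y (B ∪ M)))ᶜ hg₁i disjoint_compl_right
    (by intro p hp; rw [Finset.mem_compl, not_not]; exact hg₁cases p hp)
    (by
      rw [Finset.card_compl, Finset.card_compl, Finset.card_union_of_disjoint hdisj,
        Finset.card_insert_of_notMem hl]
      have c1 := Finset.card_insert_le v (insert y (B ∪ M))
      have c2 := Finset.card_insert_le y (B ∪ M)
      have c3 := Finset.card_union_le B M
      omega)
  have hgi' : Function.Injective g := by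
    rwa [Finset.union_compl, Finset.coe_univ, Set.injOn_univ] at hgi
  have hgl : g l = v := by
    rw [hgP l (by simp), hg₁P l (by simp), hg₀l]
  have hga : g a = y := by
    rw [hgP a (by simp [ha]), hg₁P a (by simp [ha]), hg₀a]
  have hgA : ∀ x ∈ A, x ≠ a → g x = f x := by
    intro x hx hxa
    rw [hgP x (by simp [hx]), hg₁P x (by simp [hx]), hg₀A x hx hxa]
  have hgN : ∀ x ∈ N', g x ∈ M := by
    intro x hx
    rw [hgP x (by simp [hx])]
    exact hg₁N x hx
  have hgo : ∀ x, x ∉ A → g x ∉ B := by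
    intro x hx
    by_cases h1 : x = l
    · subst h1; rwa [hgl]
    by_cases h2 : x ∈ N'
    · exact (hMadj _ (hgN x h2)).2
    · have := hgR x (by simp [h1, h2, hx])
      simp only [Finset.mem_compl, Finset.mem_insert, Finset.mem_union, not_or] at this
      exact this.2.2.1
  -- adjacency for an edge whose first endpoint lies in the cover
  have hadj : ∀ x z, T.Adj x z → x ∈ A → (x = a ∧ z = l) ∨ G.Adj (g x) (g z) := by
    intro x z hxz hx
    by_cases hxa : x = a
    · subst hxa
      by_cases hz : z ∈ A
      · right
        rw [hga, hgA z hz hxz.symm.ne]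
        exact (hcore.adj_outer _ (hmemB z hz) y hy).symm
      · by_cases hzl : z = l
        · exact Or.inl ⟨rfl, hzl⟩
        · right
          rw [hga]
          exact (hMadj _ (hgN z (by
            rw [hN', Finset.mem_erase, mem_outerNbrs]; exact ⟨hzl, hxz, hz⟩))).1
    · right
      rw [hgA x hx hxa]
      by_cases hz : z ∈ A
      · by_cases hza : z = a
        · subst hza
          rw [hga]
          exact hcore.adj_outer _ (hmemB x hx) y hy
        · rw [hgA z hz hza]
          exact hcore.adj_core x hx z hz hxz
      · exact hcore.adj_outer _ (hmemB x hx) _ (hgo z hz)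
  have := bootStep_adj_of_copy (G := G) hgi' hal (by
    intro x z hxz
    rcases hcov x z hxz with hx | hz
    · rcases hadj x z hxz hx with h | h
      · exact Or.inl h
      · exact Or.inr (Or.inr h)
    · rcases hadj z x hxz.symm hz with h | h
      · exact Or.inr (Or.inl h.symm)
      · exact Or.inr (Or.inr h.symm))
  rwa [hga, hgl] at this

/-- If a step adds an edge not inside the core `B = f(A)`, then afterwards some vertex `y ∉ B`, not
outer universal before the step, has at least `d - 1` outer neighbours, where `d` is the number of
outer neighbours in `T` of some `r ∈ A`.

The new edge lies in a copy `g` of `T`. Let `S` be the preimage under `g` of the core together with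
the set `U` of outer universal vertices. By the edge count between `A \ S` and `S \ A`, some
`r ∈ A \ S` has at most `#U + 1` neighbours in `S \ A`. The images of the other outer neighbours of
`r`, together with `U` itself, are outer neighbours of `y = g r`. -/
theorem exists_outer_deg {α β : Type*} [Fintype α] [DecidableEq α] [Fintype β]
    [DecidableEq β] {T : SimpleGraph α} (hT : T.IsAcyclic) {A : Finset α} {f : α → β}
    {G : SimpleGraph β} (hcore : IsCore T A f G) (hcov : ∀ x y, T.Adj x y → x ∈ A ∨ y ∈ A)
    {u v : β} (huv : (bootStep T G).Adj u v) (hG : ¬ G.Adj u v)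
    (hB : ¬ (u ∈ A.image f ∧ v ∈ A.image f)) :
    ∃ r ∈ A, ∃ y ∉ A.image f, y ∉ outerUniv G (A.image f) ∧
      (outerNbrs T A r).card ≤ (outerNbrs (bootStep T G) (A.image f) y).card + 1 := by
  classical
  obtain ⟨g, hg, hom, a, b, hab, rfl, rfl⟩ := exists_copy_of_bootStep_adj huv hG
  set B := A.image f with hBdef
  set U := outerUniv G B with hU
  have hBcard : B.card = A.card := Finset.card_image_of_injOn hcore.injOn
  have haB : g a ∉ B := by
    intro h
    by_cases h' : g b ∈ B
    · exact hB ⟨h, h'⟩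
    · exact hG (hcore.adj_outer _ h _ h')
  have hbB : g b ∉ B := fun h => hG (hcore.adj_outer _ h _ haB).symm
  have haU : g a ∉ U := fun h => hG ((mem_outerUniv.1 h).2 _ hbB (hg.ne hab.ne'))
  have hbU : g b ∉ U := fun h => hG ((mem_outerUniv.1 h).2 _ haB (hg.ne hab.ne)).symm
  set S : Finset α := Finset.univ.filter fun x => g x ∈ B ∪ U with hS
  have hmemS : ∀ x, x ∈ S ↔ g x ∈ B ∪ U := by simp [hS]
  have hScard : S.card ≤ A.card + U.card := by
    rw [← hBcard]
    refine le_trans ?_ (Finset.card_union_le B U)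
    exact Finset.card_le_card_of_injOn g (fun x hx => (hmemS x).1 hx) hg.injOn
  -- the cover meets `ab`, and neither end of this edge lies in `S`
  have hR : (A \ S).Nonempty := by
    rcases hcov a b hab with h | h
    · exact ⟨a, by simp [h, hmemS, haB, haU]⟩
    · exact ⟨b, by simp [h, hmemS, hbB, hbU]⟩
  -- `#S ≤ #A + #U` by injectivity of `g`; remove the common part `A ∩ S`
  have hSA : (S \ A).card ≤ (A \ S).card + U.card := by
    have h1 := Finset.card_sdiff_add_card_inter S A
    have h2 := Finset.card_sdiff_add_card_inter A S
    rw [Finset.inter_comm] at h2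
    omega
  obtain ⟨r, hr, hrdeg⟩ : ∃ r ∈ A \ S, ((S \ A).filter (T.Adj r)).card ≤ 1 + U.card := by
    by_contra! hcon
    have h1 := sum_card_adj_lt hT (A \ S) (S \ A)
      (Finset.disjoint_of_subset_left Finset.sdiff_subset Finset.disjoint_sdiff) hR
    have h2 : (A \ S).card * (2 + U.card) ≤ ∑ p ∈ A \ S, ((S \ A).filter (T.Adj p)).card := by
      rw [← smul_eq_mul]
      exact Finset.card_nsmul_le_sum _ _ _ fun p hp => by have := hcon p hp; omega
    have h3 : 1 * U.card ≤ (A \ S).card * U.card := Nat.mul_le_mul_right _ hR.card_pos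
    rw [Nat.mul_add] at h2
    omega
  rw [Finset.mem_sdiff, hmemS, Finset.mem_union, not_or] at hr
  obtain ⟨hrA, hrB, hrU⟩ := hr
  refine ⟨r, hrA, g r, hrB, hrU, ?_⟩
  set D : Finset α := (outerNbrs T A r) \ S with hD
  have hDadj : ∀ x ∈ D, T.Adj r x ∧ g x ∉ B ∧ g x ∉ U := by
    intro x hx
    rw [hD, Finset.mem_sdiff, mem_outerNbrs, hmemS, Finset.mem_union, not_or] at hx
    exact ⟨hx.1.1, hx.2⟩
  have hDcard : (outerNbrs T A r).card ≤ D.card + (1 + U.card) := by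
    have h1 := Finset.card_sdiff_add_card_inter (outerNbrs T A r) S
    rw [← hD] at h1
    have h2 : (outerNbrs T A r ∩ S).card ≤ ((S \ A).filter (T.Adj r)).card := by
      apply Finset.card_le_card
      intro x hx
      rw [Finset.mem_inter, mem_outerNbrs] at hx
      simp [hx.1.1, hx.1.2, hx.2]
    omega
  have hsub : D.image g ∪ U ⊆ outerNbrs (bootStep T G) B (g r) := by
    intro w hw
    rw [mem_outerNbrs]
    rcases Finset.mem_union.1 hw with hw | hw
    · obtain ⟨x, hx, rfl⟩ := Finset.mem_image.1 hw
      exact ⟨hom _ _ (hDadj x hx).1, (hDadj x hx).2.1⟩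
    · have := mem_outerUniv.1 hw
      refine ⟨le_bootStep _ _ (this.2 _ hrB ?_).symm, this.1⟩
      rintro rfl
      exact hrU hw
  have hdisj : Disjoint (D.image g) U := by
    rw [Finset.disjoint_left]
    intro w hw
    obtain ⟨x, hx, rfl⟩ := Finset.mem_image.1 hw
    exact (hDadj x hx).2.2
  have := Finset.card_le_card hsub
  rw [Finset.card_union_of_disjoint hdisj, Finset.card_image_of_injective _ hg] at this
  omega

/-! ### Termination from a core -/

open Classical in
/-- The pairs of distinct vertices of `B` that are not edges of `G`. -/
noncomputable def missing {β : Type*} (G : SimpleGraph β) (B : Finset β) : Finset (Sym2 β) :=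
  (B.offDiag.image Sym2.mk.uncurry).filter fun e => e ∉ G.edgeSet

theorem mem_missing {β : Type*} {G : SimpleGraph β} {B : Finset β} {u v : β} :
    s(u, v) ∈ missing G B ↔ (u ∈ B ∧ v ∈ B ∧ u ≠ v) ∧ ¬ G.Adj u v := by
  classical
  simp only [missing, Finset.mem_filter, Finset.mem_image, Finset.mem_offDiag, Prod.exists,
    Function.uncurry_apply_pair, mem_edgeSet, and_congr_left_iff]
  intro _
  constructor
  · rintro ⟨a, b, h, heq⟩
    rcases Sym2.eq_iff.1 heq with ⟨rfl, rfl⟩ | ⟨rfl, rfl⟩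
    · exact h
    · exact ⟨h.2.1, h.1, h.2.2.symm⟩
  · intro h
    exact ⟨u, v, h, rfl⟩

theorem card_missing_le {β : Type*} (G : SimpleGraph β) (B : Finset β) :
    (missing G B).card ≤ B.card.choose 2 := by
  classical
  rw [← Sym2.card_image_offDiag]
  unfold missing
  convert Finset.card_filter_le _ _

theorem missing_mono {β : Type*} {G G' : SimpleGraph β} (h : G ≤ G') (B : Finset β) :
    missing G' B ⊆ missing G B := by
  intro e
  induction e with | _ u v
  rw [mem_missing, mem_missing]
  exact fun hh => ⟨hh.1, fun hG => hh.2 (h hG)⟩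

theorem card_missing_lt {β : Type*} {G G' : SimpleGraph β} (h : G ≤ G') {B : Finset β}
    {u v : β} (hu : u ∈ B) (hv : v ∈ B) (hG : ¬ G.Adj u v) (hG' : G'.Adj u v) :
    (missing G' B).card < (missing G B).card := by
  apply Finset.card_lt_card
  rw [Finset.ssubset_iff_of_subset (missing_mono h B)]
  exact ⟨s(u, v), mem_missing.2 ⟨⟨hu, hv, hG'.ne⟩, hG⟩, fun hh => (mem_missing.1 hh).2 hG'⟩

theorem exists_new_edge {β : Type*} {G G' : SimpleGraph β} (h : G ≤ G') (hne : G ≠ G') :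
    ∃ u v, G'.Adj u v ∧ ¬ G.Adj u v := by
  by_contra! hcon
  exact hne (le_antisymm h fun u v huv => hcon u v huv)

/-- Once every outer vertex is outer universal, each further step adds an edge inside the core, so
the number of missing core edges bounds the number of remaining steps. -/
theorem exists_stuck_of_full {α β : Type*} [Fintype β] [DecidableEq β] {T : SimpleGraph α}
    {A : Finset α} {f : α → β} {G : SimpleGraph β} (M : ℕ) (i : ℕ)
    (hcore : IsCore T A f (bootProcess T G i))
    (hfull : ∀ y ∉ A.image f, y ∈ outerUniv (bootProcess T G i) (A.image f))
    (hM : (missing (bootProcess T G i) (A.image f)).card ≤ M) :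
    ∃ j ≤ i + M, bootProcess T G j = bootProcess T G (j + 1) := by
  induction M generalizing i with
  | zero =>
    refine ⟨i, le_rfl, ?_⟩
    by_contra hne
    obtain ⟨u, v, h1, h2⟩ := exists_new_edge (bootProcess_mono T G (Nat.le_succ i)) hne
    by_cases hu : u ∈ A.image f <;> by_cases hv : v ∈ A.image f
    · have := card_missing_lt (bootProcess_mono T G (Nat.le_succ i)) hu hv h2 h1
      omega
    · exact h2 (hcore.adj_outer u hu v hv)
    · exact h2 (hcore.adj_outer v hv u hu).symm
    · exact h2 ((mem_outerUniv.1 (hfull u hu)).2 v hv h1.ne')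
  | succ M ih =>
    by_cases hne : bootProcess T G i = bootProcess T G (i + 1)
    · exact ⟨i, by omega, hne⟩
    have hle : bootProcess T G i ≤ bootProcess T G (i + 1) := bootProcess_mono T G (Nat.le_succ i)
    obtain ⟨u, v, h1, h2⟩ := exists_new_edge hle hne
    by_cases hu : u ∈ A.image f <;> by_cases hv : v ∈ A.image f
    · have := card_missing_lt hle hu hv h2 h1
      obtain ⟨j, hj, hj'⟩ := ih (i + 1) (hcore.mono hle)
        (fun y hy => outerUniv_mono hle _ (hfull y hy)) (by omega)
      exact ⟨j, by omega, hj'⟩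
    · exact absurd (hcore.adj_outer u hu v hv) h2
    · exact absurd (hcore.adj_outer v hv u hu).symm h2
    · exact absurd ((mem_outerUniv.1 (hfull u hu)).2 v hv h1.ne') h2

/-- From a core on, the potential `#missing + 2 * (d - 1 - #outerUniv) + 1` bounds the number of
remaining steps, where `d` is the least number of outer neighbours of a vertex of `A`. A step that
adds a core edge lowers the first term; any other effective step produces, after one further step,
a new outer universal vertex. Once there are `d - 1` of these, every outer vertex has `d - 1` outer
neighbours, so one step makes all of them universal. -/
theorem exists_stuck {α β : Type*} [Fintype α] [DecidableEq α] [Fintype β] [DecidableEq β]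
    {T : SimpleGraph α} (hT : T.IsAcyclic) {A : Finset α} {f : α → β} {G : SimpleGraph β}
    (hcov : ∀ x y, T.Adj x y → x ∈ A ∨ y ∈ A)
    (hcard : Fintype.card α + 1 ≤ Fintype.card β)
    (hpriv : ∀ a ∈ A, ∃ l, l ∉ A ∧ T.Adj a l)
    {a₀ : α} (ha₀ : a₀ ∈ A)
    (hmin : ∀ a ∈ A, (outerNbrs T A a₀).card ≤ (outerNbrs T A a).card)
    (r i : ℕ) (hcore : IsCore T A f (bootProcess T G i))
    (hr : (missing (bootProcess T G i) (A.image f)).card +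
      2 * ((outerNbrs T A a₀).card - 1 - (outerUniv (bootProcess T G i) (A.image f)).card) + 1
        ≤ r) :
    ∃ j ≤ i + r, bootProcess T G j = bootProcess T G (j + 1) := by
  obtain ⟨l₀, hl₀, hal₀⟩ := hpriv a₀ ha₀
  induction r using Nat.strong_induction_on generalizing i with
  | _ r ih =>
  set B := A.image f with hB
  have hle : bootProcess T G i ≤ bootProcess T G (i + 1) := bootProcess_mono T G (Nat.le_succ i)
  have hle2 : bootProcess T G (i + 1) ≤ bootProcess T G (i + 1 + 1) :=
    bootProcess_mono T G (Nat.le_succ (i + 1))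
  by_cases hU : (outerNbrs T A a₀).card - 1 ≤ (outerUniv (bootProcess T G i) B).card
  · obtain ⟨j, hj, hj'⟩ := exists_stuck_of_full (T := T) (G := G) (A := A) (f := f)
      (missing (bootProcess T G i) B).card (i + 1) (hcore.mono hle) (fun y hy => by
        by_cases hyU : y ∈ outerUniv (bootProcess T G i) B
        · exact outerUniv_mono hle _ hyU
        refine mem_outerUniv_bootStep hcore hcov hcard ha₀ hl₀ hal₀ hy ?_
        have hsub : outerUniv (bootProcess T G i) B ⊆ outerNbrs (bootProcess T G i) B y := by
          intro w hw
          have h := mem_outerUniv.1 hw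
          refine mem_outerNbrs.2 ⟨(h.2 y hy ?_).symm, h.1⟩
          rintro rfl
          exact hyU hw
        have := Finset.card_le_card hsub
        rw [← hB]
        omega) (Finset.card_le_card (missing_mono hle B))
    exact ⟨j, by omega, hj'⟩
  by_cases hne : bootProcess T G i = bootProcess T G (i + 1)
  · exact ⟨i, by omega, hne⟩
  obtain ⟨u, v, h1, h2⟩ := exists_new_edge hle hne
  by_cases huvB : u ∈ B ∧ v ∈ B
  · have hm := card_missing_lt hle huvB.1 huvB.2 h2 h1
    have hu := Finset.card_le_card (outerUniv_mono hle B)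
    obtain ⟨j, hj, hj'⟩ := ih (r - 1) (by omega) (i + 1) (hcore.mono hle) (by omega)
    exact ⟨j, by omega, hj'⟩
  · obtain ⟨a, ha, y, hyB, hyU, hdeg⟩ := exists_outer_deg hT hcore hcov h1 h2 huvB
    have hy2 : y ∈ outerUniv (bootProcess T G (i + 1 + 1)) B :=
      mem_outerUniv_bootStep (hcore.mono hle) hcov hcard ha₀ hl₀ hal₀ hyB
        ((hmin a ha).trans hdeg)
    have hlt : (outerUniv (bootProcess T G i) B).card <
        (outerUniv (bootProcess T G (i + 1 + 1)) B).card := by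
      apply Finset.card_lt_card
      rw [Finset.ssubset_iff_of_subset (outerUniv_mono (hle.trans hle2) B)]
      exact ⟨y, hy2, hyU⟩
    have hm := Finset.card_le_card (missing_mono (hle.trans hle2) B)
    obtain ⟨j, hj, hj'⟩ := ih (r - 2) (by omega) (i + 1 + 1) (hcore.mono (hle.trans hle2))
      (by omega)
    exact ⟨j, by omega, hj'⟩

/-! ### The bound on the running time -/

/-- The total `2 * s + 2 * d + s.choose 2` multiplied by `8`, with `8 * s.choose 2` written as
`4 * (s * (s - 1))`. -/
theorem runningTime_bound_arith {s d t : ℕ} (hs : 1 ≤ s) (hd : 1 ≤ d) (h2s : 2 * s ≤ t)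
    (hsd : s * d + 1 ≤ t) :
    16 * s + 16 * d + 4 * (s * (s - 1)) ≤ t ^ 2 + 6 * t + 60 := by
  obtain ⟨s, rfl⟩ : ∃ k, s = k + 1 := ⟨s - 1, by omega⟩
  rw [Nat.add_sub_cancel]
  rcases Nat.lt_or_ge d 3 with hd3 | hd3
  · interval_cases d
    · nlinarith
    · have : 2 * (s + 1) + 1 ≤ t := by omega
      nlinarith
  · rcases Nat.eq_zero_or_pos s with rfl | hs'
    · zify at *
      nlinarith [sq_nonneg ((t : ℤ) - 5)]
    · have h3 : (s + 1) * 3 ≤ (s + 1) * d := Nat.mul_le_mul_left _ hd3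
      have h4 : 2 * d ≤ (s + 1) * d := Nat.mul_le_mul_right _ (by omega)
      obtain ⟨x, hx⟩ : ∃ x, x = (s + 1) * d := ⟨_, rfl⟩
      rw [← hx] at h3 h4 hsd
      zify at *
      nlinarith [sq_nonneg ((t : ℤ) - 5)]

/-- With `s = #A` and `d` the least number of outer neighbours in `T` of a vertex of `A`: one step
creates a copy of `T`, `2 * s` more a core, and at most `s.choose 2 + 2 * (d - 1) + 1` further steps
exhaust the potential. -/
theorem runningTime_le {t n : ℕ} (hn : 2 * t ≤ n) (T : SimpleGraph (Fin t)) (hT : T.IsTree)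
    (G : SimpleGraph (Fin n)) : 8 * runningTime T G ≤ t ^ 2 + 6 * t + 60 := by
  -- with running time `0` there need not be any copy of `T`
  by_cases h0 : bootProcess T G 0 = bootProcess T G 1
  · have : runningTime T G ≤ 0 := Nat.sInf_le h0
    omega
  have hac := hT.isAcyclic
  obtain ⟨u, v, h1, h2⟩ := exists_new_edge (bootProcess_mono T G (Nat.le_succ 0)) h0
  obtain ⟨f, hf, hom, x, y, hxy, -, -⟩ := exists_copy_of_bootStep_adj h1 h2
  obtain ⟨A, hA, hcov⟩ := exists_peel_cover hac
  obtain ⟨m, hmi, hm⟩ := hA.exists_matching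
  have hAne : A.Nonempty := by
    rcases hcov x y hxy with h | h
    · exact ⟨x, h⟩
    · exact ⟨y, h⟩
  have ht : 0 < t := x.pos
  have hcard : 2 * Fintype.card (Fin t) ≤ Fintype.card (Fin n) := by simpa using hn
  obtain ⟨a₀, ha₀, hmin⟩ := Finset.exists_min_image A (fun a => (outerNbrs T A a).card) hAne
  have hcore := exists_isCore (i := 1) hf hom hA hcov hcard
  obtain ⟨j, hj, hj'⟩ := exists_stuck hac hcov (by rw [Fintype.card_fin, Fintype.card_fin]; omega)
    (fun a ha => ⟨m a, (hm a ha).1, (hm a ha).2.1⟩) ha₀ hmin _ _ hcore le_rfl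
  have hrt : runningTime T G ≤ j := Nat.sInf_le hj'
  have hmiss := card_missing_le (bootProcess T G (1 + A.card + A.card)) (A.image f)
  rw [Finset.card_image_of_injOn hcore.injOn] at hmiss
  have hd1 : 1 ≤ (outerNbrs T A a₀).card :=
    Finset.card_pos.2 ⟨m a₀, mem_outerNbrs.2 ⟨(hm a₀ ha₀).2.1, (hm a₀ ha₀).1⟩⟩
  have h2s : 2 * A.card ≤ t := by
    have h3 : (A.image m).card = A.card := Finset.card_image_of_injOn hmi
    have h4 : Disjoint A (A.image m) := by
      rw [Finset.disjoint_right]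
      intro z hz
      obtain ⟨a, ha, rfl⟩ := Finset.mem_image.1 hz
      exact (hm a ha).1
    have h5 := Finset.card_le_univ (A ∪ A.image m)
    rw [Finset.card_union_of_disjoint h4, h3, Fintype.card_fin] at h5
    omega
  -- the forest between `A` and its complement has at most `t - 1` edges
  have hsd : A.card * (outerNbrs T A a₀).card + 1 ≤ t := by
    classical
    have h3 := sum_card_adj_lt hac A Aᶜ disjoint_compl_right hAne
    have h4 : A.card * (outerNbrs T A a₀).card ≤
        ∑ p ∈ A, ((Aᶜ).filter (T.Adj p)).card := by
      rw [← smul_eq_mul]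
      refine Finset.card_nsmul_le_sum _ _ _ fun p hp => (hmin p hp).trans ?_
      apply Finset.card_le_card
      intro z hz
      rw [mem_outerNbrs] at hz
      simp [hz.1, hz.2]
    rw [Finset.card_add_card_compl, Fintype.card_fin] at h3
    omega
  have har := runningTime_bound_arith hAne.card_pos hd1 h2s hsd
  have hch : 2 * A.card.choose 2 ≤ A.card * (A.card - 1) := by
    rw [Nat.choose_two_right]
    exact Nat.mul_div_le _ _
  omega

/-- Let `t ∈ ℕ` and `n ≥ 2t`. Every tree `T` on `t` vertices satisfies
`M_T(n) ≤ (1/8)·(t² + 6t + 60)`. -/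
theorem maxRunningTime_tree_le (t n : ℕ) (hn : 2 * t ≤ n)
    (T : SimpleGraph (Fin t)) (hT : T.IsTree) :
    (maxRunningTime T n : ℝ) ≤ ((t : ℝ) ^ 2 + 6 * t + 60) / 8 := by
  have h : maxRunningTime T n ≤ (t ^ 2 + 6 * t + 60) / 8 := by
    refine csSup_le ⟨_, ⊥, rfl⟩ ?_
    rintro _ ⟨G, rfl⟩
    have := runningTime_le hn T hT G
    omega
  have h' : 8 * maxRunningTime T n ≤ t ^ 2 + 6 * t + 60 := by omega
  have h'' : (8 * maxRunningTime T n : ℝ) ≤ (t : ℝ) ^ 2 + 6 * t + 60 := by exact_mod_cast h'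
  linarith
end

section
/- Let H be a connected graph with minimum degree δ(H) ≥ 2 and maximum degree Δ(H) ≥ 3. Then there exist a constant c > 0 and n₀ ∈ ℕ such that M_H(n) ≥ c·n for all n ≥ n₀. -/
/-!
Let `d = δ(H) ≥ 2`. The starting graph consists of a large constant-size clique on an initial
segment of `{0, …, n - 1}` together with a sparse graph of bounded bandwidth in which each vertex
beyond the clique has exactly `d - 1` smaller neighbours: `x` is joined to `x - 1` and to `x - iM`
for `1 ≤ i ≤ d - 2`, where `M = |V(H)| + 1`. For `d = 2` this is a clique with a pendant path.

*Everything gets infected* (`stable_complete`). The first vertex `x` outside an initial clique has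
`d - 1` neighbours in it, so each missing edge `xy` into the clique completes a copy of `H` in which
`x` plays the role of a vertex of degree `d`. Hence a stable graph above the starting graph is
complete.

*The speed is bounded* (`bootStep_le`). Suppose all edges lie inside the first `m` vertices or in
the sparse graph, and a new edge `pq` with an end far beyond `m` completes a copy of `H`. The copy
has few vertices, so it skips an interval longer than the bandwidth, and the part `S` of the copy
beyond the interval is closed under all its edges except `pq`. In `S`, all vertices have sparse
degree at least `d`, except `p` and `q` where it is at least `d - 1`. Locally the sparse graph is
grid-like, so a finite subset has several extremal vertices of degree at most `d - 1`. As `p` and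
`q` are the only candidates, this forces `S` onto a path with ends `p`, `q` (`sparse_core`). By
connectivity the copy of `H` is then this path together with `pq`, contradicting `Δ(H) ≥ 3`.

Thus each step extends the clique by at most a constant `R`, while the edge between `0` and `n - 1`
must eventually be infected, which takes at least about `n / R` steps.
-/

open SimpleGraph

/-! ### Counting copies -/

section Copies

variable {α β : Type*} {H : SimpleGraph α}

lemma mem_copies_iff {G : SimpleGraph β} {G' : G.Subgraph} :
    Nonempty (G'.coe ≃g H) ↔ ∃ c : Copy H G, c.toSubgraph = G' := by
  have h := Copy.range_toSubgraph (A := H) (B := G)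
  have h' : G' ∈ Set.range (Copy.toSubgraph (A := H) (B := G)) ↔ Nonempty (H ≃g G'.coe) := by
    rw [h]; rfl
  rw [← Set.mem_range, h']
  exact ⟨fun ⟨e⟩ => ⟨e.symm⟩, fun ⟨e⟩ => ⟨e.symm⟩⟩

lemma map_ofLE_toSubgraph {G G₁ : SimpleGraph β} (hle : G ≤ G₁) (c : Copy H G) :
    c.toSubgraph.map (Hom.ofLE hle) = ((Copy.ofLE G G₁ hle).comp c).toSubgraph := by
  simp only [Copy.toSubgraph, ← Subgraph.map_comp]
  rfl

/-- If enlarging `G` to `G₁` creates new copies of `H`, then some copy of `H` in `G₁` uses an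
edge outside `G`. -/
lemma exists_copy_of_numCopies_lt [Finite β] {G G₁ : SimpleGraph β} (hle : G ≤ G₁)
    (h : numCopies H G < numCopies H G₁) :
    ∃ c : Copy H G₁, ∃ a b, H.Adj a b ∧ ¬ G.Adj (c a) (c b) := by
  by_contra! hcon
  refine absurd h (not_lt.mpr ?_)
  unfold numCopies
  calc _ ≤ ((Subgraph.map (Hom.ofLE hle)) '' {G' : G.Subgraph | Nonempty (G'.coe ≃g H)}).ncard := by
        refine Set.ncard_le_ncard ?_ (Set.toFinite _)
        intro G' hG'
        obtain ⟨c, rfl⟩ := mem_copies_iff.1 hG'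
        let c' : Copy H G := ⟨⟨c, fun {a b} hab => hcon c a b hab⟩, c.injective⟩
        refine ⟨c'.toSubgraph, mem_copies_iff.2 ⟨c', rfl⟩, ?_⟩
        rw [map_ofLE_toSubgraph]
        congr 1
    _ ≤ _ := Set.ncard_image_le (Set.toFinite _)

/-- If a copy of `H` in `G₁ ≥ G` uses an edge outside `G`, then `G₁` has more copies of `H`. -/
lemma numCopies_lt_of_copy [Finite β] {G G₁ : SimpleGraph β} (hle : G ≤ G₁)
    (c : Copy H G₁) {a b : α} (hab : H.Adj a b) (hn : ¬ G.Adj (c a) (c b)) :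
    numCopies H G < numCopies H G₁ := by
  unfold numCopies
  have hinj : Function.Injective (Subgraph.map (Hom.ofLE hle)) := by
    intro A B hAB
    have h1 := congrArg Subgraph.verts hAB
    have h2 := congrArg Subgraph.Adj hAB
    ext x y
    · simpa using congrArg (x ∈ ·) h1
    · simpa [Relation.Map] using congrFun (congrFun h2 x) y
  rw [← Set.ncard_image_of_injective _ hinj]
  refine Set.ncard_lt_ncard ⟨?_, fun hsub => ?_⟩ (Set.toFinite _)
  · rintro _ ⟨G', hG', rfl⟩
    obtain ⟨c, rfl⟩ := mem_copies_iff.1 hG'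
    exact mem_copies_iff.2 ⟨_, (map_ofLE_toSubgraph hle c).symm⟩
  · obtain ⟨G', -, hG'⟩ := hsub (mem_copies_iff.2 ⟨c, rfl⟩ : c.toSubgraph ∈ _)
    have : (c.toSubgraph).Adj (c a) (c b) := ⟨a, b, by simpa using hab, rfl, rfl⟩
    rw [← hG'] at this
    obtain ⟨x, y, hxy, hx, hy⟩ := this
    have := G'.adj_sub hxy
    simp only [Hom.ofLE_apply] at hx hy
    exact hn (hx ▸ hy ▸ this)

end Copies

/-! ### The sparse graph -/

section Sparse

/-- The differences allowed between adjacent vertices of the sparse graph on `ℕ`: the number `1`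
and the `d - 2` smallest positive multiples of `M`. -/
def steps (d M : ℕ) : Finset ℕ := insert 1 ((Finset.Icc 1 (d - 2)).image (· * M))

/-- Adjacency in the sparse graph on `ℕ`: the difference lies in `steps d M`. Every sufficiently
large vertex has exactly `d - 1` smaller neighbours. -/
def SparseAdj (d M x y : ℕ) : Prop := ∃ k ∈ steps d M, x = y + k ∨ y = x + k

lemma SparseAdj.symm {d M x y : ℕ} (h : SparseAdj d M x y) : SparseAdj d M y x := by
  obtain ⟨k, hk, h⟩ := h
  exact ⟨k, hk, h.symm⟩

lemma mem_steps {d M k : ℕ} :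
    k ∈ steps d M ↔ k = 1 ∨ ∃ i, 1 ≤ i ∧ i ≤ d - 2 ∧ k = i * M := by
  simp only [steps, Finset.mem_insert, Finset.mem_image, Finset.mem_Icc]
  constructor
  · rintro (h | ⟨i, hi, rfl⟩)
    · exact Or.inl h
    · exact Or.inr ⟨i, hi.1, hi.2, rfl⟩
  · rintro (h | ⟨i, h1, h2, rfl⟩)
    · exact Or.inl h
    · exact Or.inr ⟨i, ⟨h1, h2⟩, rfl⟩

lemma steps_bounds {d M k : ℕ} (hd : 2 ≤ d) (hM : 2 ≤ M) (hk : k ∈ steps d M) :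
    1 ≤ k ∧ k ≤ d * M := by
  rcases mem_steps.1 hk with rfl | ⟨i, h1, h2, rfl⟩
  · constructor <;> nlinarith
  · exact ⟨by nlinarith, Nat.mul_le_mul_right _ (by omega)⟩

lemma one_mem_steps {d M : ℕ} : 1 ∈ steps d M := mem_steps.2 (Or.inl rfl)

lemma card_steps {d M : ℕ} (hd : 2 ≤ d) (hM : 2 ≤ M) : (steps d M).card = d - 1 := by
  unfold steps
  rw [Finset.card_insert_of_notMem, Finset.card_image_of_injective]
  · simp; omega
  · intro a b hab
    exact Nat.eq_of_mul_eq_mul_right (by omega) hab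
  · simp only [Finset.mem_image, Finset.mem_Icc, not_exists, not_and]
    rintro i ⟨h1, -⟩ h
    nlinarith

lemma card_le_of_forall_exists {V : Type*} {g : V → ℕ} (hg : Function.Injective g)
    {N : Finset V} (T : Finset ℕ) (F : ℕ → ℕ) (h : ∀ b ∈ N, ∃ k ∈ T, g b = F k) :
    N.card ≤ T.card := by
  classical
  rw [← Finset.card_image_of_injective N hg]
  refine le_trans (Finset.card_le_card ?_) (Finset.card_image_le (f := F))
  intro x hx
  obtain ⟨b, hb, rfl⟩ := Finset.mem_image.1 hx
  obtain ⟨k, hk, hk'⟩ := h b hb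
  exact Finset.mem_image.2 ⟨k, hk, hk'.symm⟩

/-- A nonempty subgraph of the sparse graph with fewer than `M` vertices, all of whose degrees are
at least `d` except possibly at `p`, `q` where they are at least `d - 1`, contains both `p` and `q`,
has maximum degree at most `2`, and has degree at most `1` at `p` and `q`. Here `S` is the vertex
set, `g` places it in `ℕ` and `N a` is the neighbourhood of `a`.

Extremal vertices of `S` with respect to suitable orders have degree at most `d - 1` and thus are
`p` or `q`. This applies to the maximum, the minimum, and the lowest vertex of the block of `M`
consecutive integers containing the maximum; if `S` met more than one block, the first and the
third would coincide and this vertex would have degree at most `d - 2`. So `S` lies in one block,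
where only steps of length `1` occur. -/
lemma sparse_core {V : Type*} {d M : ℕ} (hd : 2 ≤ d) (hM : 2 ≤ M) {g : V → ℕ}
    (hg : Function.Injective g) (S : Finset V) (hS : S.Nonempty) (hSM : S.card < M)
    (N : V → Finset V) (p q : V)
    (hN : ∀ a ∈ S, ∀ b ∈ N a, b ∈ S ∧ SparseAdj d M (g a) (g b))
    (hdeg : ∀ a ∈ S, a ≠ p → a ≠ q → d ≤ (N a).card)
    (hdeg' : ∀ a ∈ S, d - 1 ≤ (N a).card) :
    p ∈ S ∧ q ∈ S ∧ ∀ a ∈ S, (N a).card ≤ 2 ∧ ((a = p ∨ a = q) → (N a).card ≤ 1) := by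
  classical
  -- A residue class mod `M` missing `S`; shifting it to `0`, steps of length `1` inside `S`
  -- never change the quotient by `M`.
  obtain ⟨c, hc⟩ : ∃ c, ∀ a ∈ S, (g a + c) % M ≠ 0 := by
    obtain ⟨r, hr, hr'⟩ := Finset.exists_mem_notMem_of_card_lt_card
      (s := S.image (fun a => g a % M)) (t := Finset.range M)
      (lt_of_le_of_lt Finset.card_image_le (by simpa using hSM))
    rw [Finset.mem_range] at hr
    refine ⟨M - r, fun a ha h => hr' (Finset.mem_image.2 ⟨a, ha, ?_⟩)⟩
    obtain ⟨t, ht⟩ := Nat.dvd_of_mod_eq_zero h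
    have h1 : g a + M = r + M * t := by omega
    have h2 := congrArg (· % M) h1
    simpa [Nat.mod_eq_of_lt hr] using h2
  set Q : V → ℕ := fun a => (g a + c) / M with hQ
  have hmono : ∀ a b, g a ≤ g b → Q a ≤ Q b := fun a b h => Nat.div_le_div_right (by omega)
  have hQ1 : ∀ a ∈ S, ∀ b ∈ S, g b = g a + 1 → Q b = Q a := by
    intro a ha b hb h
    have h1 := hc b hb
    simp only [hQ]
    rw [h] at h1 ⊢
    rw [show g a + 1 + c = (g a + c) + 1 by ring] at h1 ⊢
    rw [Nat.succ_div_of_not_dvd (fun h => h1 (Nat.mod_eq_zero_of_dvd h))]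
  have hQM : ∀ a b i, g b = g a + i * M → Q b = Q a + i := by
    intro a b i h
    simp only [hQ]
    rw [h, show g a + i * M + c = (g a + c) + i * M by ring, Nat.add_mul_div_right _ _ (by omega)]
  have key : ∀ a ∈ S, ∀ b ∈ N a, b ∈ S ∧ ((Q a = Q b ∧ (g a = g b + 1 ∨ g b = g a + 1)) ∨
      ∃ k ∈ (steps d M).erase 1, (Q b < Q a ∧ g a = g b + k) ∨ (Q a < Q b ∧ g b = g a + k)) := by
    intro a ha b hb
    obtain ⟨hbS, k, hk, h⟩ := hN a ha b hb
    refine ⟨hbS, ?_⟩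
    rcases mem_steps.1 hk with rfl | ⟨i, hi1, hi2, rfl⟩
    · left
      rcases h with h | h
      · exact ⟨hQ1 b hbS a ha h, Or.inl h⟩
      · exact ⟨(hQ1 a ha b hbS h).symm, Or.inr h⟩
    · right
      refine ⟨i * M, Finset.mem_erase.2 ⟨by nlinarith, hk⟩, ?_⟩
      rcases h with h | h
      · exact Or.inl ⟨by have := hQM b a i h; omega, h⟩
      · exact Or.inr ⟨by have := hQM a b i h; omega, h⟩
  obtain ⟨P, hPS, hP⟩ := S.exists_max_image g hS
  obtain ⟨R, hRS, hR⟩ := S.exists_min_image g hS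
  have hcard := card_steps hd hM
  have hcard1 : ((steps d M).erase 1).card = d - 2 := by
    rw [Finset.card_erase_of_mem one_mem_steps, hcard]; omega
  have hin : ∀ a ∈ S, (N a).card ≤ d - 1 → a = p ∨ a = q := by
    intro a ha h
    by_contra! hcon
    have := hdeg a ha hcon.1 hcon.2
    omega
  have hPpq : P = p ∨ P = q := by
    refine hin P hPS (hcard ▸ card_le_of_forall_exists hg _ (fun k => g P - k) ?_)
    intro b hb
    obtain ⟨hbS, k, hk, h⟩ := hN P hPS b hb
    have := hP b hbS
    have := (steps_bounds hd hM hk).1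
    exact ⟨k, hk, by omega⟩
  have hRpq : R = p ∨ R = q := by
    refine hin R hRS (hcard ▸ card_le_of_forall_exists hg _ (fun k => g R + k) ?_)
    intro b hb
    obtain ⟨hbS, k, hk, h⟩ := hN R hRS b hb
    have := hR b hbS
    have := (steps_bounds hd hM hk).1
    exact ⟨k, hk, by omega⟩
  -- Otherwise the lowest vertex of the top block is again exceptional, hence equals `P`.
  have hQQ : Q P = Q R := by
    by_contra hne
    obtain ⟨P', hP'S, hP'⟩ := (S.filter (fun a => Q a = Q P)).exists_min_image g
      ⟨P, by simp [hPS]⟩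
    obtain ⟨hP'S, hP'Q⟩ := Finset.mem_filter.1 hP'S
    have hP'pq : P' = p ∨ P' = q := by
      refine hin P' hP'S (hcard ▸ card_le_of_forall_exists hg _
        (fun k => if k = 1 then g P' + 1 else g P' - k) ?_)
      intro b hb
      obtain ⟨hbS, ⟨h1, h2⟩ | ⟨k, hk, h⟩⟩ := key P' hP'S b hb
      · have := hP' b (Finset.mem_filter.2 ⟨hbS, by omega⟩)
        exact ⟨1, one_mem_steps, by simp; omega⟩
      · have := hmono b P (hP b hbS)
        obtain ⟨hk1, hk⟩ := Finset.mem_erase.1 hk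
        exact ⟨k, hk, by simp [hk1]; omega⟩
    have hPR : P ≠ R := fun h => hne (by rw [h])
    have hP'R : P' ≠ R := fun h => hne (by rw [← hP'Q, h])
    have hPP' : P = P' := by
      rcases hPpq with rfl | rfl <;> rcases hRpq with rfl | rfl <;>
        rcases hP'pq with rfl | rfl <;> simp_all
    have h3 := hdeg' P hPS
    have h4 : (N P).card ≤ ((steps d M).erase 1).card := by
      refine card_le_of_forall_exists hg _ (fun k => g P - k) ?_
      intro b hb
      have hle := hP b (key P hPS b hb).1
      obtain ⟨hbS, ⟨h1, h2⟩ | ⟨k, hk, h⟩⟩ := key P hPS b hb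
      · have := hP' b (Finset.mem_filter.2 ⟨hbS, by omega⟩)
        rw [← hPP'] at this
        omega
      · exact ⟨k, hk, by omega⟩
    omega
  have hall : ∀ a ∈ S, Q a = Q R := fun a ha =>
    le_antisymm (hQQ ▸ hmono a P (hP a ha)) (hmono R a (hR a ha))
  have key2 : ∀ a ∈ S, ∀ b ∈ N a, b ∈ S ∧ (g a = g b + 1 ∨ g b = g a + 1) := by
    intro a ha b hb
    obtain ⟨hbS, ⟨h1, h2⟩ | ⟨k, hk, h⟩⟩ := key a ha b hb
    · exact ⟨hbS, h2⟩
    · have := hall a ha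
      have := hall b hbS
      omega
  have hPR : P ≠ R := by
    rintro rfl
    have := hdeg' P hPS
    obtain ⟨b, hb⟩ := Finset.card_pos.1 (show 0 < (N P).card by omega)
    have h1 := key2 P hPS b hb
    have h2 := hP b h1.1
    have h3 := hR b h1.1
    omega
  have hP1 : (N P).card ≤ 1 := by
    have := card_le_of_forall_exists hg (N := N P) {0} (fun _ => g P - 1) ?_
    · simpa using this
    · intro b hb
      have h1 := key2 P hPS b hb
      have h2 := hP b h1.1
      exact ⟨0, by simp, by omega⟩
  have hR1 : (N R).card ≤ 1 := by
    have := card_le_of_forall_exists hg (N := N R) {0} (fun _ => g R + 1) ?_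
    · simpa using this
    · intro b hb
      have h1 := key2 R hRS b hb
      have h2 := hR b h1.1
      exact ⟨0, by simp, by omega⟩
  have hpq : (p = P ∧ q = R) ∨ (p = R ∧ q = P) := by
    rcases hPpq with rfl | rfl <;> rcases hRpq with rfl | rfl <;> simp_all
  refine ⟨by rcases hpq with ⟨rfl, rfl⟩ | ⟨rfl, rfl⟩ <;> assumption,
    by rcases hpq with ⟨rfl, rfl⟩ | ⟨rfl, rfl⟩ <;> assumption, fun a ha => ⟨?_, ?_⟩⟩
  · have := card_le_of_forall_exists hg (N := N a) {0, 1}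
      (fun k => if k = 0 then g a - 1 else g a + 1) ?_
    · simpa using this
    · intro b hb
      rcases (key2 a ha b hb).2 with h | h
      · exact ⟨0, by simp, by simp; omega⟩
      · exact ⟨1, by simp, by simp; omega⟩
  · rintro (rfl | rfl) <;> rcases hpq with ⟨rfl, rfl⟩ | ⟨rfl, rfl⟩ <;> assumption

end Sparse

/-! ### Bounded speed -/

section Speed

variable {V : Type} [Fintype V] {H : SimpleGraph V}

lemma ncard_neighborSet_eq [DecidableRel H.Adj] (v : V) :
    (H.neighborSet v).ncard = (Finset.univ.filter (H.Adj v)).card := by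
  rw [← Set.ncard_coe_finset]
  congr 1
  ext w
  simp

/-- A copy of `H` (placed in `ℕ` by `g`) cannot be completed by an edge `pq` whose end `p` lies
far beyond `m`, when all other edges lie below `m` or in the sparse graph: the copy has few
vertices, so it skips a long interval between `m` and `p`, and the part beyond that interval
contradicts `sparse_core`. -/
lemma no_far_copy (hconn : H.Connected) {d : ℕ} (hd : 2 ≤ d)
    (hdeg : ∀ v : V, d ≤ (H.neighborSet v).ncard)
    (hmax : ∃ v : V, 3 ≤ (H.neighborSet v).ncard) {M : ℕ} (hM : M = Fintype.card V + 1)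
    {g : V → ℕ} (hg : Function.Injective g) {m : ℕ} {p q : V} (hpq : H.Adj p q)
    (hadj : ∀ a b, H.Adj a b → ((a = p ∧ b = q) ∨ (a = q ∧ b = p)) ∨ (g a < m ∧ g b < m) ∨
      SparseAdj d M (g a) (g b))
    (hp : m + M * (d * M) + 1 ≤ g p) : False := by
  classical
  have hM2 : 2 ≤ M := by
    have : 0 < Fintype.card V := Fintype.card_pos_iff.2 ⟨p⟩
    omega
  set B := d * M with hB
  have hBpos : 0 < B := by positivity
  -- The `M` intervals `[m + 1 + sB, m + 1 + (s + 1)B)`, `s < M`, outnumber the vertices of `H`, so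
  -- one of them contains no vertex of the copy, and edges of length at most `B` cannot jump it.
  obtain ⟨s, hs, hs'⟩ := Finset.exists_mem_notMem_of_card_lt_card
      (s := Finset.univ.image (fun a => (g a - (m + 1)) / B)) (t := Finset.range M)
      (lt_of_le_of_lt Finset.card_image_le (by simp [hM]))
  rw [Finset.mem_range] at hs
  have hs'' : ∀ a, (g a - (m + 1)) / B ≠ s := fun a h =>
    hs' (Finset.mem_image.2 ⟨a, Finset.mem_univ _, h⟩)
  set S : Finset V := Finset.univ.filter (fun a => s < (g a - (m + 1)) / B) with hSdef
  have hS : ∀ a, a ∈ S ↔ s < (g a - (m + 1)) / B := fun a => by simp [hSdef]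
  have hpS : p ∈ S := by
    rw [hS]
    have : M ≤ (g p - (m + 1)) / B := (Nat.le_div_iff_mul_le hBpos).2 (by omega)
    omega
  set N : V → Finset V := fun a => Finset.univ.filter
    (fun b => H.Adj a b ∧ ¬((a = p ∧ b = q) ∨ (a = q ∧ b = p))) with hNdef
  have hN : ∀ a b, b ∈ N a ↔ H.Adj a b ∧ ¬((a = p ∧ b = q) ∨ (a = q ∧ b = p)) := by
    simp [hNdef]
  have hclosed : ∀ a ∈ S, ∀ b ∈ N a, b ∈ S ∧ SparseAdj d M (g a) (g b) := by
    intro a ha b hb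
    rw [hS] at ha
    have h1 : (s + 1) * B ≤ g a - (m + 1) := (Nat.le_div_iff_mul_le hBpos).1 ha
    have h2 : B ≤ (s + 1) * B := Nat.le_mul_of_pos_left _ (by omega)
    obtain ⟨hab, hne⟩ := (hN a b).1 hb
    rcases hadj a b hab with h | h | h
    · exact absurd h hne
    · omega
    · refine ⟨?_, h⟩
      obtain ⟨k, hk, hk'⟩ := h
      have h3 := (steps_bounds hd hM2 hk).2
      rw [hS]
      have h4 : s ≤ (g b - (m + 1)) / B := by
        rw [Nat.le_div_iff_mul_le hBpos]
        rw [add_mul] at h1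
        omega
      have := hs'' b
      omega
  have hle : ∀ a, a ≠ p → a ≠ q → (H.neighborSet a).ncard ≤ (N a).card := by
    intro a h1 h2
    rw [ncard_neighborSet_eq]
    refine Finset.card_le_card fun b hb => ?_
    rw [hN]
    simp [h1, h2] at hb ⊢
    exact hb
  have hle1 : ∀ a, (H.neighborSet a).ncard ≤ (N a).card + 1 := by
    intro a
    rw [ncard_neighborSet_eq]
    refine le_trans (Finset.card_le_card (t := insert (if a = p then q else p) (N a)) ?_)
      (Finset.card_insert_le _ _)
    intro b hb
    have hab : H.Adj a b := by simpa using hb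
    rw [Finset.mem_insert, hN]
    by_contra! hcon
    rcases hcon.2 hab with ⟨rfl, rfl⟩ | ⟨rfl, rfl⟩
    · simp at hcon
    · simp [hpq.ne'] at hcon
  obtain ⟨-, hqS, hsmall⟩ := sparse_core hd hM2 hg S ⟨p, hpS⟩
    (lt_of_le_of_lt (Finset.card_le_univ S) (by omega)) N p q hclosed
    (fun a _ h1 h2 => (hdeg a).trans (hle a h1 h2))
    (fun a _ => by have := hdeg a; have := hle1 a; omega)
  -- Both ends of the new edge lie in `S`, so `S` is everything by connectivity.
  have hwalk : ∀ a b, H.Walk a b → a ∈ S → b ∈ S := by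
    intro a b w
    induction w with
    | nil => exact id
    | @cons u v _ huv _ ih =>
      intro hu
      apply ih
      by_cases h : (u = p ∧ v = q) ∨ (u = q ∧ v = p)
      · rcases h with ⟨rfl, rfl⟩ | ⟨rfl, rfl⟩ <;> assumption
      · exact (hclosed u hu v ((hN u v).2 ⟨huv, h⟩)).1
  obtain ⟨v, hv⟩ := hmax
  obtain ⟨w⟩ := hconn.preconnected p v
  obtain ⟨h1, h2⟩ := hsmall v (hwalk p v w hpS)
  by_cases h : v = p ∨ v = q
  · have := h2 h
    have := hle1 v
    omega
  · push Not at h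
    have := hle v h.1 h.2
    omega

/-- The sparse graph on `{0, …, n - 1}` with the first `m` vertices turned into a clique. -/
def cliqueSparse (d M n m : ℕ) : SimpleGraph (Fin n) where
  Adj x y := x ≠ y ∧ ((x.val < m ∧ y.val < m) ∨ SparseAdj d M x y)
  symm := ⟨fun _ _ h => ⟨h.1.symm, h.2.imp And.symm SparseAdj.symm⟩⟩
  loopless := ⟨fun _ h => h.1 rfl⟩

lemma cliqueSparse_mono {d M n m m' : ℕ} (h : m ≤ m') :
    cliqueSparse d M n m ≤ cliqueSparse d M n m' := fun _ _ hxy =>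
  ⟨hxy.1, hxy.2.imp (fun h' => ⟨h'.1.trans_le h, h'.2.trans_le h⟩) id⟩

/-- The infection spreads at bounded speed: in one step the clique absorbs at most a constant
number of further vertices, and no edges appear beyond it. -/
lemma bootStep_le (hconn : H.Connected) {d : ℕ} (hd : 2 ≤ d)
    (hdeg : ∀ v : V, d ≤ (H.neighborSet v).ncard)
    (hmax : ∃ v : V, 3 ≤ (H.neighborSet v).ncard) {M : ℕ} (hM : M = Fintype.card V + 1)
    {n m : ℕ} {G : SimpleGraph (Fin n)} (hG : G ≤ cliqueSparse d M n m) :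
    bootStep H G ≤ cliqueSparse d M n (m + M * (d * M) + 1) := by
  have key : ∀ u v : Fin n, u ≠ v →
      numCopies H G < numCopies H (G ⊔ SimpleGraph.fromEdgeSet {s(u, v)}) →
      (cliqueSparse d M n (m + M * (d * M) + 1)).Adj u v := by
    intro u v huv hlt
    obtain ⟨c, p, q, hpq, hnot⟩ := exists_copy_of_numCopies_lt le_sup_left hlt
    have hnew : ∀ a b, (G ⊔ SimpleGraph.fromEdgeSet {s(u, v)}).Adj a b →
        G.Adj a b ∨ (a = u ∧ b = v) ∨ (a = v ∧ b = u) := by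
      intro a b h
      rw [SimpleGraph.sup_adj, SimpleGraph.fromEdgeSet_adj] at h
      simpa using h.imp id And.left
    have hg : Function.Injective (fun a => (c a).val) :=
      fun a b h => c.injective (Fin.ext h)
    have huvpq := (hnew _ _ (c.toHom.map_adj hpq)).resolve_left hnot
    simp only [Copy.toHom_apply] at huvpq
    have hadj : ∀ a b, H.Adj a b → ((a = p ∧ b = q) ∨ (a = q ∧ b = p)) ∨
        ((c a).val < m ∧ (c b).val < m) ∨ SparseAdj d M (c a).val (c b).val := by
      intro a b hab
      rcases hnew _ _ (c.toHom.map_adj hab) with h | h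
      · exact Or.inr (hG h).2
      · left
        simp only [Copy.toHom_apply] at h
        rcases h with ⟨h1, h2⟩ | ⟨h1, h2⟩ <;> rcases huvpq with ⟨h3, h4⟩ | ⟨h3, h4⟩
        · exact Or.inl ⟨c.injective (h1.trans h3.symm), c.injective (h2.trans h4.symm)⟩
        · exact Or.inr ⟨c.injective (h1.trans h4.symm), c.injective (h2.trans h3.symm)⟩
        · exact Or.inr ⟨c.injective (h1.trans h4.symm), c.injective (h2.trans h3.symm)⟩
        · exact Or.inl ⟨c.injective (h1.trans h3.symm), c.injective (h2.trans h4.symm)⟩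
    have hp : (c p).val < m + M * (d * M) + 1 := by
      by_contra! h
      exact no_far_copy hconn hd hdeg hmax hM hg hpq hadj h
    have hq : (c q).val < m + M * (d * M) + 1 := by
      by_contra! h
      exact no_far_copy hconn hd hdeg hmax hM hg hpq.symm
        (fun a b hab => (hadj a b hab).imp Or.symm id) h
    refine ⟨huv, Or.inl ?_⟩
    rcases huvpq with ⟨h3, h4⟩ | ⟨h3, h4⟩
    · exact ⟨lt_of_eq_of_lt (congrArg Fin.val h3.symm) hp,
        lt_of_eq_of_lt (congrArg Fin.val h4.symm) hq⟩
    · exact ⟨lt_of_eq_of_lt (congrArg Fin.val h4.symm) hq,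
        lt_of_eq_of_lt (congrArg Fin.val h3.symm) hp⟩
  intro u v h
  rcases h with h | h
  · exact cliqueSparse_mono (by omega) (hG h)
  · obtain ⟨hne, h | h⟩ := (SimpleGraph.fromRel_adj _ _ _).1 h
    · exact key u v hne h
    · exact (key v u hne.symm h).symm

end Speed

/-! ### The process infects every edge -/

section Complete

variable {V : Type} [Fintype V] {H : SimpleGraph V}

/-- A vertex `x` with `d - 1` neighbours in a large clique, where `H` has a vertex of degree `d`,
gets joined to the whole clique: the missing edge `xy` is the last one of a copy of `H` in which
`x` plays the role of that vertex. -/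
lemma stable_extend {d M : ℕ} (hd : 2 ≤ d) (hM : 2 ≤ M) {v₀ : V}
    (hv₀ : (H.neighborSet v₀).ncard = d) {n L : ℕ} (hLV : Fintype.card V ≤ L) (hLd : d * M ≤ L)
    {G : SimpleGraph (Fin n)} (hG : cliqueSparse d M n L ≤ G) (hstable : bootStep H G = G)
    (x y : Fin n) (hLx : L ≤ x.val) (hyx : y < x)
    (ih : ∀ a b : Fin n, a < x → b < x → a ≠ b → G.Adj a b) : G.Adj x y := by
  classical
  by_contra hxy
  rw [ncard_neighborSet_eq] at hv₀
  obtain ⟨w₀, hw₀⟩ := Finset.card_pos.1 (show 0 < (Finset.univ.filter (H.Adj v₀)).card by omega)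
  set N := (Finset.univ.filter (H.Adj v₀)).erase w₀ with hNdef
  have hNcard : N.card = (steps d M).card := by
    rw [hNdef, Finset.card_erase_of_mem hw₀, hv₀, card_steps hd hM]
  have hw₀' : H.Adj v₀ w₀ := by simpa using hw₀
  have hNmem : ∀ b, H.Adj v₀ b → b ≠ w₀ → b ∈ N := fun b h1 h2 => by simp [hNdef, h1, h2]
  have hv₀N : v₀ ∉ N := by simp [hNdef]
  have hw₀N : w₀ ∉ N := by simp [hNdef]
  let e : N ≃ steps d M := Finset.equivOfCardEq hNcard
  let back : steps d M → Fin n := fun k => ⟨x.val - k.1, by omega⟩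
  have hbk : ∀ k : steps d M, 1 ≤ k.1 ∧ k.1 ≤ x.val := fun k => by
    have := steps_bounds hd hM k.2
    omega
  have hbackinj : Function.Injective back := by
    intro k l h
    have h1 := congrArg Fin.val h
    simp only [back] at h1
    have := hbk k
    have := hbk l
    exact Subtype.ext (by omega)
  have hbacklt : ∀ k, back k < x := fun k => by
    have := hbk k
    rw [Fin.lt_def]
    simp only [back]
    omega
  have hbackadj : ∀ k, G.Adj x (back k) := fun k => by
    refine hG ⟨(hbacklt k).ne', Or.inr ⟨k.1, k.2, Or.inl ?_⟩⟩
    have := hbk k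
    simp only [back]
    omega
  have hbacky : ∀ k, back k ≠ y := fun k h => hxy (h ▸ hbackadj k)
  -- `v₀` goes to `x`, one neighbour `w₀` to `y`, the other neighbours to the `d - 1` sparse
  -- neighbours of `x` below it; the remaining vertices are then placed arbitrarily in the clique.
  let f : V → Fin n := fun a => if a = v₀ then x else if h : a ∈ N then back (e ⟨a, h⟩) else y
  have hfv : f v₀ = x := by simp [f]
  have hfw : f w₀ = y := by simp [f, hw₀'.ne', hw₀N]
  have hfN : ∀ a (h : a ∈ N), f a = back (e ⟨a, h⟩) := fun a h => by
    have : a ≠ v₀ := fun h' => hv₀N (h' ▸ h)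
    simp [f, this, h]
  have hfle : ∀ a, f a ≤ x := by
    intro a
    simp only [f]
    split_ifs
    · exact le_rfl
    · exact (hbacklt _).le
    · exact hyx.le
  let A : Finset V := insert v₀ (insert w₀ N)
  have hA : ∀ a ∈ A, a = v₀ ∨ a = w₀ ∨ a ∈ N := fun a h => by simpa [A] using h
  have hinjA : Set.InjOn f A := by
    intro a ha b hb hab
    rcases hA a ha with rfl | rfl | ha' <;> rcases hA b hb with rfl | rfl | hb'
    · rfl
    · rw [hfv, hfw] at hab; exact absurd hab hyx.ne'
    · rw [hfv, hfN b hb'] at hab; exact absurd hab (hbacklt _).ne'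
    · rw [hfv, hfw] at hab; exact absurd hab hyx.ne
    · rfl
    · rw [hfw, hfN b hb'] at hab; exact absurd hab.symm (hbacky _)
    · rw [hfv, hfN a ha'] at hab; exact absurd hab (hbacklt _).ne
    · rw [hfw, hfN a ha'] at hab; exact absurd hab (hbacky _)
    · rw [hfN a ha', hfN b hb'] at hab
      exact congrArg Subtype.val (e.injective (hbackinj hab))
  obtain ⟨t, hAt, htx, htcard⟩ := Finset.exists_subsuperset_card_eq
    (s := A.image f) (t := Finset.Iic x) (n := Fintype.card V)
    (by
      intro z hz
      obtain ⟨a, -, rfl⟩ := Finset.mem_image.1 hz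
      exact Finset.mem_Iic.2 (hfle a))
    (Finset.card_image_le.trans (Finset.card_le_univ A))
    (by rw [Fin.card_Iic]; omega)
  obtain ⟨φ, hφ⟩ := Finset.exists_equiv_extend_of_card_eq htcard.symm hAt hinjA
  have hφinj : Function.Injective (fun a => (φ a : Fin n)) :=
    Subtype.val_injective.comp φ.injective
  have hφv : (φ v₀ : Fin n) = x := by rw [hφ v₀ (by simp [A]), hfv]
  have hφw : (φ w₀ : Fin n) = y := by rw [hφ w₀ (by simp [A]), hfw]
  have hφlt : ∀ a, a ≠ v₀ → (φ a : Fin n) < x := fun a ha =>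
    lt_of_le_of_ne (Finset.mem_Iic.1 (htx (φ a).2))
      (fun h => ha (hφinj (h.trans hφv.symm)))
  have hstar : ∀ b, H.Adj v₀ b → (G ⊔ SimpleGraph.fromEdgeSet {s(x, y)}).Adj x (φ b) := by
    intro b hb
    by_cases h : b = w₀
    · subst h
      rw [hφw]
      right
      simp [hyx.ne']
    · left
      have hbN := hNmem b hb h
      rw [hφ b (by simp [A, hbN]), hfN b hbN]
      exact hbackadj _
  let c : Copy H (G ⊔ SimpleGraph.fromEdgeSet {s(x, y)}) :=
    ⟨⟨fun a => φ a, fun {a b} hab => by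
      by_cases ha : a = v₀
      · subst ha
        rw [hφv]
        exact hstar b hab
      · by_cases hb : b = v₀
        · subst hb
          rw [hφv]
          exact (hstar a hab.symm).symm
        · left
          exact ih _ _ (hφlt a ha) (hφlt b hb) (fun h => hab.ne (hφinj h))⟩, hφinj⟩
  have hlt : numCopies H G < numCopies H (G ⊔ SimpleGraph.fromEdgeSet {s(x, y)}) :=
    numCopies_lt_of_copy le_sup_left c hw₀' (by
      change ¬ G.Adj (φ v₀ : Fin n) (φ w₀ : Fin n)
      rwa [hφv, hφw])
  apply hxy
  rw [← hstable]
  right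
  exact (SimpleGraph.fromRel_adj _ _ _).2 ⟨hyx.ne', Or.inl hlt⟩

/-- The only graph above the starting graph that is stable under the process is the complete
graph. -/
lemma stable_complete {d M : ℕ} (hd : 2 ≤ d) (hM : 2 ≤ M) {v₀ : V}
    (hv₀ : (H.neighborSet v₀).ncard = d) {n L : ℕ} (hLV : Fintype.card V ≤ L) (hLd : d * M ≤ L)
    {G : SimpleGraph (Fin n)} (hG : cliqueSparse d M n L ≤ G) (hstable : bootStep H G = G)
    (x y : Fin n) (hxy : x ≠ y) : G.Adj x y := by
  have key : ∀ m : ℕ, ∀ x y : Fin n, x.val < m → y.val < m → x ≠ y → G.Adj x y := by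
    intro m
    induction m with
    | zero => intro x y h; omega
    | succ m ih =>
      have main : ∀ x y : Fin n, x.val = m → y < x → G.Adj x y := by
        intro x y hx hyx
        by_cases hL : x.val < L
        · exact hG ⟨hyx.ne', Or.inl ⟨hL, by rw [Fin.lt_def] at hyx; omega⟩⟩
        · exact stable_extend hd hM hv₀ hLV hLd hG hstable x y (by omega) hyx
            (fun a b ha hb => ih a b (by rw [Fin.lt_def] at ha; omega)
              (by rw [Fin.lt_def] at hb; omega))
      intro x y hx hy hne
      rcases lt_or_gt_of_ne hne with h | h
      · by_cases hy' : y.val = m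
        · exact (main y x hy' h).symm
        · rw [Fin.lt_def] at h
          exact ih x y (by omega) (by omega) hne
      · by_cases hx' : x.val = m
        · exact main x y hx' h
        · rw [Fin.lt_def] at h
          exact ih x y (by omega) (by omega) hne
  exact key n x y x.2 y.2 hxy

end Complete

/-! ### Running times -/

section RunningTime

variable {α β : Type*} (H : SimpleGraph α)

lemma le_bootProcess (G : SimpleGraph β) (t : ℕ) : G ≤ bootProcess H G t := by
  induction t with
  | zero => exact le_rfl
  | succ t ih => exact ih.trans le_sup_left

lemma bootProcess_runningTime [Finite β] (G : SimpleGraph β) :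
    bootProcess H G (runningTime H G) = bootProcess H G (runningTime H G + 1) := by
  have hmono : Monotone (bootProcess H G) := monotone_nat_of_le_succ fun t => le_sup_left
  obtain ⟨t, ht⟩ := WellFoundedGT.monotone_chain_condition ⟨_, hmono⟩
  exact Nat.sInf_mem (s := {t | bootProcess H G t = bootProcess H G (t + 1)})
    ⟨t, ht (t + 1) (by omega)⟩

lemma runningTime_le_maxRunningTime {n : ℕ} (G : SimpleGraph (Fin n)) :
    runningTime H G ≤ maxRunningTime H n :=
  le_csSup (Set.finite_range (fun G : SimpleGraph (Fin n) => runningTime H G)).bddAbove ⟨G, rfl⟩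

end RunningTime

/-! ### The linear lower bound -/

/-- If `H` is a connected graph with minimum degree at least 2 and
maximum degree at least 3, then `M_H(n) = Ω(n)`. -/
theorem maxRunningTime_linear_lower {V : Type} [Fintype V] (H : SimpleGraph V)
    (hconn : H.Connected)
    (hmindeg : ∀ v : V, 2 ≤ (H.neighborSet v).ncard)
    (hmaxdeg : ∃ v : V, 3 ≤ (H.neighborSet v).ncard) :
    ∃ c : ℝ, 0 < c ∧ ∃ n₀ : ℕ, ∀ n : ℕ, n₀ ≤ n →
      c * n ≤ (maxRunningTime H n : ℝ) := by
  classical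
  obtain ⟨v₀, -, hv₀⟩ := Finset.exists_min_image Finset.univ
    (fun v => (H.neighborSet v).ncard) ⟨hconn.nonempty.some, Finset.mem_univ _⟩
  set d := (H.neighborSet v₀).ncard with hd
  have hd2 : 2 ≤ d := hmindeg v₀
  have hdeg : ∀ v : V, d ≤ (H.neighborSet v).ncard := fun v => hv₀ v (Finset.mem_univ _)
  obtain ⟨M, hM⟩ : ∃ M, M = Fintype.card V + 1 := ⟨_, rfl⟩
  have hM2 : 2 ≤ M := by
    have : 0 < Fintype.card V := Fintype.card_pos_iff.2 hconn.nonempty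
    omega
  obtain ⟨R, hR⟩ : ∃ R, R = M * (d * M) + 1 := ⟨_, rfl⟩
  obtain ⟨L, hL⟩ : ∃ L, L = Fintype.card V + d * M + 1 := ⟨_, rfl⟩
  have hRpos : (0 : ℝ) < R := by rw [hR]; positivity
  refine ⟨1 / (2 * R), by positivity, 2 * L + 2, fun n hn => ?_⟩
  set G := cliqueSparse d M n L with hG
  have hspeed : ∀ t, bootProcess H G t ≤ cliqueSparse d M n (L + t * R) := by
    intro t
    induction t with
    | zero =>
      rw [Nat.zero_mul, Nat.add_zero]
      exact le_rfl
    | succ t ih =>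
      refine (bootStep_le hconn hd2 hdeg hmaxdeg hM ih).trans (cliqueSparse_mono ?_)
      rw [hR]
      apply le_of_eq
      ring
  have hfinal := bootProcess_runningTime H G
  set τ := runningTime H G with hτ
  have hadj := stable_complete (H := H) hd2 hM2 hd.symm (n := n) (L := L) (by omega) (by omega)
    (le_bootProcess H G τ) hfinal.symm ⟨n - 1, by omega⟩ ⟨0, by omega⟩
    (by simp only [ne_eq, Fin.mk.injEq]; omega)
  have hn2 : n ≤ L + τ * R := by
    obtain ⟨-, ⟨h, -⟩ | ⟨k, hk, h⟩⟩ := hspeed τ hadj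
    · simp only at h; omega
    · have := (steps_bounds hd2 hM2 hk).2
      simp only at h
      omega
  have h1 : (n : ℝ) ≤ L + τ * R := by exact_mod_cast hn2
  have h2 : (2 * L + 2 : ℝ) ≤ n := by exact_mod_cast hn
  have h3 : (τ : ℝ) ≤ maxRunningTime H n := by
    exact_mod_cast runningTime_le_maxRunningTime H G
  refine le_trans ?_ h3
  rw [div_mul_eq_mul_div, div_le_iff₀ (by positivity)]
  linarith
end

section
/- For every s ≥ 3: (i) M_{K_{2,s}}(n) ≤ 4n + 3 for every n ∈ ℕ; and (ii) there exist a constant c > 0 and n₀ ∈ ℕ such that M_{K_{2,s}}(n) ≥ c·n for all n ≥ n₀. In particular M_{K_{2,s}}(n) = Θ(n). -/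
/-!
Two distinct vertices are called *twins* in `G` if they have at least `s - 1` common neighbours.
A missing edge `uv` completes a copy of `K_{2,s}` if and only if `v` is a neighbour of a twin
of `u`, or vice versa (`bootStep_adj`). So one step of the process joins every vertex to all
neighbours of its twins, and the process is governed by the increasing sequence of twin graphs
`R_i = twin s G_i`.

*Upper bound.* Vertices at distance two in `R_i` are adjacent in `R_{i+1}`
(`twin_step_of_twin_of_twin`). If `R_i` is a union of cliques and `R_{i+2} = R_i`, the process
has stopped by time `i + 2` (`step_eq_of_twin_eq`). Otherwise the independence number `α` drops:
if `R_i` is not a union of cliques then `α(R_{i+2}) < α(R_i)`, since a set independent in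
`R_{i+2}` has pairwise distances at least four in `R_i` and can be enlarged near an induced path
on three vertices (`indepNum_lt_of_not_isTrans`); if `R_i` and `R_{i+2}` are different unions of
cliques, then `α` is the number of cliques, which decreases. Hence `α` drops in every four steps
until the process stops, and as `1 ≤ α ≤ n` the running time is at most `4n`.

*Lower bound.* Start from `K_{s-1,s-1}` with a pendant path. The complete bipartite part absorbs
the path at most one vertex per step (`step_tadpole_le`), because for `s ≥ 3` a vertex outside it
has no twins, while a stable graph containing the initial one has absorbed the whole path
(`tadpole_le_of_stable`). So the running time is at least `n - 2s`.
-/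

open SimpleGraph

namespace KTwoBootstrap

variable {V : Type*}

/-! ### Which edges are added in one step -/

/-- A subgraph of `G`, regarded as a subgraph of a larger graph `G'`. -/
def liftSub {G G' : SimpleGraph V} (h : G ≤ G') (K : G.Subgraph) : G'.Subgraph where
  verts := K.verts
  Adj := K.Adj
  adj_sub hab := h (K.adj_sub hab)
  edge_vert hab := K.edge_vert hab
  symm := K.symm

lemma liftSub_injective {G G' : SimpleGraph V} (h : G ≤ G') :
    Function.Injective (liftSub h) := by
  intro K L hKL
  have h1 : (liftSub h K).verts = (liftSub h L).verts := by rw [hKL]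
  have h2 : (liftSub h K).Adj = (liftSub h L).Adj := by rw [hKL]
  exact Subgraph.ext h1 h2

/-- Enlarging the host graph increases the number of copies exactly when some copy in the
larger graph uses a new edge. -/
lemma numCopies_lt_iff [Finite V] {α : Type*} (H : SimpleGraph α) {G G' : SimpleGraph V}
    (h : G ≤ G') :
    numCopies H G < numCopies H G' ↔
      ∃ K : G'.Subgraph, Nonempty (K.coe ≃g H) ∧ ∃ u v, K.Adj u v ∧ ¬ G.Adj u v := by
  have himg : ∀ K : G'.Subgraph, K ∈ liftSub h '' {K | Nonempty (K.coe ≃g H)} ↔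
      Nonempty (K.coe ≃g H) ∧ ∀ u v, K.Adj u v → G.Adj u v := by
    intro K
    constructor
    · rintro ⟨L, ⟨e⟩, rfl⟩
      exact ⟨⟨e⟩, fun u v huv => L.adj_sub huv⟩
    · rintro ⟨⟨e⟩, hK⟩
      exact ⟨⟨K.verts, K.Adj, fun {u v} huv => hK u v huv, K.edge_vert, K.symm⟩, ⟨e⟩, rfl⟩
  have hsub : liftSub h '' {K | Nonempty (K.coe ≃g H)} ⊆
      {K : G'.Subgraph | Nonempty (K.coe ≃g H)} := fun K hK => ((himg K).1 hK).1
  have hcard : numCopies H G = (liftSub h '' {K | Nonempty (K.coe ≃g H)}).ncard :=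
    (Set.ncard_image_of_injective _ (liftSub_injective h)).symm
  rw [hcard]
  constructor
  · intro hlt
    obtain ⟨K, hK, hK'⟩ := Set.exists_mem_notMem_of_ncard_lt_ncard hlt (Set.toFinite _)
    refine ⟨K, hK, ?_⟩
    by_contra! hcon
    exact hK' ((himg K).2 ⟨hK, hcon⟩)
  · rintro ⟨K, hK, u, v, huv, hn⟩
    refine Set.ncard_lt_ncard (hsub.ssubset_of_mem_notMem hK ?_) (Set.toFinite _)
    exact fun hmem => hn (((himg K).1 hmem).2 u v huv)

/-- The twin graph of `G`: distinct vertices with at least `s - 1` common neighbours. The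
inequality is written `s ≤ #S + 1` to avoid truncated subtraction. -/
def twin (s : ℕ) (G : SimpleGraph V) : SimpleGraph V where
  Adj u w := u ≠ w ∧ ∃ S : Finset V, s ≤ S.card + 1 ∧ ∀ x ∈ S, G.Adj u x ∧ G.Adj w x
  symm := ⟨fun _ _ ⟨h, S, hS, hx⟩ => ⟨h.symm, S, hS, fun x hxS => (hx x hxS).symm⟩⟩
  loopless := ⟨fun _ h => h.1 rfl⟩

lemma twin_mono {s : ℕ} {G G' : SimpleGraph V} (h : G ≤ G') : twin s G ≤ twin s G' := by
  rintro u w ⟨hne, S, hS, hx⟩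
  exact ⟨hne, S, hS, fun x hxS => ⟨h (hx x hxS).1, h (hx x hxS).2⟩⟩

/-- A copy of `K_{2,s}` through the new edge `uv`, with `u` in the part of size two, yields a
twin `w` of `u` adjacent to `v`, namely the other vertex of that part. -/
lemma twin_of_iso {s : ℕ} {G G' : SimpleGraph V} {u v : V}
    (hG' : ∀ x y, G'.Adj x y → G.Adj x y ∨ s(x, y) = s(u, v)) (K : G'.Subgraph)
    (e : K.coe ≃g completeBipartiteGraph (Fin 2) (Fin s)) (hu : u ∈ K.verts) (hv : v ∈ K.verts)
    {a : Fin 2} {b : Fin s} (ha : e ⟨u, hu⟩ = Sum.inl a) (hb : e ⟨v, hv⟩ = Sum.inr b) :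
    ∃ w, G.Adj w v ∧ (twin s G).Adj u w := by
  classical
  have key : ∀ (a : Fin 2) (b : Fin s), K.Adj (e.symm (Sum.inl a)) (e.symm (Sum.inr b)) := by
    intro a b
    have : K.coe.Adj (e.symm (Sum.inl a)) (e.symm (Sum.inr b)) := by
      rw [e.symm.map_adj_iff]; simp
    exact this
  have hinj : ∀ x y, ((e.symm x : K.verts) : V) = e.symm y → x = y := by
    intro x y hxy
    exact e.symm.injective (Subtype.ext hxy)
  have hu' : ((e.symm (Sum.inl a) : K.verts) : V) = u := by rw [← ha]; simp
  have hv' : ((e.symm (Sum.inr b) : K.verts) : V) = v := by rw [← hb]; simp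
  have hold : ∀ (c : Fin 2) (d : Fin s), (c ≠ a ∨ d ≠ b) →
      G.Adj (e.symm (Sum.inl c)) (e.symm (Sum.inr d)) := by
    intro c d hcd
    rcases hG' _ _ (K.adj_sub (key c d)) with h1 | h1
    · exact h1
    · exfalso
      rw [Sym2.eq_iff, ← hu', ← hv'] at h1
      rcases h1 with ⟨h1, h2⟩ | ⟨h1, h2⟩
      · have := hinj _ _ h1
        have := hinj _ _ h2
        simp_all
      · have := hinj _ _ h1
        simp_all
  obtain ⟨c, hc⟩ : ∃ c : Fin 2, c ≠ a := exists_ne a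
  refine ⟨e.symm (Sum.inl c), ?_, ?_, ?_⟩
  · rw [← hv']; exact hold c b (Or.inl hc)
  · rw [← hu']; intro h
    have := hinj _ _ h
    simp_all
  · refine ⟨(Finset.univ.erase b).image (fun d => ((e.symm (Sum.inr d) : K.verts) : V)), ?_, ?_⟩
    · rw [Finset.card_image_of_injective, Finset.card_erase_of_mem (Finset.mem_univ _)]
      · simp; omega
      · intro x y hxy
        simpa using hinj _ _ hxy
    · intro x hx
      rw [Finset.mem_image] at hx
      obtain ⟨d, hd, rfl⟩ := hx
      have hd' : d ≠ b := (Finset.mem_erase.1 hd).1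
      rw [← hu']
      exact ⟨hold a d (Or.inr hd'), hold c d (Or.inr hd')⟩

/-- Conversely a twin `w` of `u` adjacent to `v` completes a copy of `K_{2,s}` whose part of
size two is `{u, w}`, and which uses the new edge `uv`. -/
lemma numCopies_lt_of_twin [Finite V] {s : ℕ} (hs : 1 ≤ s) {G : SimpleGraph V} {u v w : V}
    (huv : u ≠ v) (hn : ¬ G.Adj u v) (hwv : G.Adj w v) (hw : (twin s G).Adj u w) :
    numCopies (completeBipartiteGraph (Fin 2) (Fin s)) G <
      numCopies (completeBipartiteGraph (Fin 2) (Fin s))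
        (G ⊔ SimpleGraph.fromEdgeSet {s(u, v)}) := by
  obtain ⟨k, rfl⟩ : ∃ k, s = k + 1 := ⟨s - 1, by omega⟩
  obtain ⟨hne, S, hS, hx⟩ := hw
  rw [numCopies_lt_iff _ le_sup_left]
  obtain ⟨T, hTS, hT⟩ := Finset.exists_subset_card_eq (show k ≤ S.card by omega)
  let g : Fin k ≃ T := (T.equivFinOfCardEq hT).symm
  have hg : ∀ i, G.Adj u (g i) ∧ G.Adj w (g i) := fun i => hx _ (hTS (g i).2)
  let p : Fin 2 → V := ![u, w]
  let q : Fin (k + 1) → V := Fin.cons v (fun i => (g i : V))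
  have hq : ∀ j, q j = v ∨ ∃ i, q j = g i := by
    intro j
    refine Fin.cases (Or.inl rfl) (fun i => Or.inr ⟨i, rfl⟩) j
  have hp : ∀ j, p j = u ∨ p j = w := by
    intro j; fin_cases j <;> simp [p]
  have hpq : ∀ i j, (G ⊔ SimpleGraph.fromEdgeSet {s(u, v)}).Adj (p i) (q j) := by
    intro i j
    rcases hp i with h1 | h1 <;> rcases hq j with h2 | ⟨l, h2⟩ <;> rw [h1, h2]
    · right; simp [huv]
    · left; exact (hg l).1
    · left; exact hwv
    · left; exact (hg l).2
  let f : completeBipartiteGraph (Fin 2) (Fin (k + 1)) →g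
      (G ⊔ SimpleGraph.fromEdgeSet {s(u, v)}) :=
    { toFun := Sum.elim p q
      map_rel' := by
        rintro (i | i) (j | j) h
        · simp at h
        · exact hpq i j
        · exact (hpq j i).symm
        · simp at h }
  have hpinj : Function.Injective p := by
    intro i j h
    fin_cases i <;> fin_cases j <;> simp_all [p]
  have hqinj : Function.Injective q := by
    refine Fin.cons_injective_iff.2 ⟨?_, fun i j h => g.injective (Subtype.ext h)⟩
    rintro ⟨i, hi⟩
    exact hn (hi ▸ (hg i).1)
  have hf : Function.Injective f := by
    refine hpinj.sumElim hqinj ?_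
    intro i j h
    exact (hpq i j).ne h
  refine ⟨(f.toCopy hf).toSubgraph, ⟨(f.toCopy hf).isoToSubgraph.symm⟩, u, v, ?_, hn⟩
  exact ⟨Sum.inl 0, Sum.inr 0, by simp, rfl, rfl⟩

lemma numCopies_lt_iff_twin [Finite V] {s : ℕ} (hs : 1 ≤ s) {G : SimpleGraph V} {u v : V}
    (huv : u ≠ v) (hn : ¬ G.Adj u v) :
    numCopies (completeBipartiteGraph (Fin 2) (Fin s)) G <
      numCopies (completeBipartiteGraph (Fin 2) (Fin s))
        (G ⊔ SimpleGraph.fromEdgeSet {s(u, v)}) ↔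
    (∃ w, G.Adj w v ∧ (twin s G).Adj u w) ∨ (∃ w, G.Adj w u ∧ (twin s G).Adj v w) := by
  constructor
  · intro h
    obtain ⟨K, ⟨e⟩, x, y, hxy, hnxy⟩ := (numCopies_lt_iff _ le_sup_left).1 h
    have h1 := K.adj_sub hxy
    rw [SimpleGraph.sup_adj, SimpleGraph.fromEdgeSet_adj] at h1
    have hK : K.Adj u v := by
      rcases h1 with h1 | ⟨h1, -⟩
      · exact absurd h1 hnxy
      · rw [Set.mem_singleton_iff, Sym2.eq_iff] at h1
        rcases h1 with ⟨rfl, rfl⟩ | ⟨rfl, rfl⟩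
        · exact hxy
        · exact hxy.symm
    have hu := K.edge_vert hK
    have hv := K.edge_vert hK.symm
    have he : (completeBipartiteGraph (Fin 2) (Fin s)).Adj (e ⟨u, hu⟩) (e ⟨v, hv⟩) := by
      rw [e.map_adj_iff]; exact hK
    have hG' : ∀ x y, (G ⊔ SimpleGraph.fromEdgeSet {s(u, v)}).Adj x y →
        G.Adj x y ∨ s(x, y) = s(u, v) := by
      intro x y h
      rw [SimpleGraph.sup_adj, SimpleGraph.fromEdgeSet_adj] at h
      exact h.imp_right fun h => h.1
    rcases ha : e ⟨u, hu⟩ with a | a <;> rcases hb : e ⟨v, hv⟩ with b | b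
    · simp [ha, hb] at he
    · exact Or.inl (twin_of_iso hG' K e hu hv ha hb)
    · refine Or.inr (twin_of_iso (fun x y h => ?_) K e hv hu hb ha)
      rw [Sym2.eq_swap (a := v)]
      exact hG' x y h
    · simp [ha, hb] at he
  · rintro (⟨w, hw, ht⟩ | ⟨w, hw, ht⟩)
    · exact numCopies_lt_of_twin hs huv hn hw ht
    · rw [Sym2.eq_swap]
      exact numCopies_lt_of_twin hs huv.symm (fun h => hn h.symm) hw ht

/-- One step of the process joins each vertex to the neighbours of its twins. -/
lemma bootStep_adj [Finite V] {s : ℕ} (hs : 1 ≤ s) {G : SimpleGraph V} {u v : V} :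
    (bootStep (completeBipartiteGraph (Fin 2) (Fin s)) G).Adj u v ↔
      G.Adj u v ∨ u ≠ v ∧ ((∃ w, G.Adj w v ∧ (twin s G).Adj u w) ∨
        (∃ w, G.Adj w u ∧ (twin s G).Adj v w)) := by
  by_cases hn : G.Adj u v
  · simp [bootStep, hn]
  by_cases huv : u = v
  · subst huv; simp
  have hn' : ¬ G.Adj v u := fun h => hn h.symm
  rw [bootStep, SimpleGraph.sup_adj, SimpleGraph.fromRel_adj,
    numCopies_lt_iff_twin hs huv hn, numCopies_lt_iff_twin hs (Ne.symm huv) hn',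
    or_comm (a := ∃ w, G.Adj w u ∧ _), or_self]

/-! ### The twin graph along the process -/

/-- One step of the `K_{2,s}`-bootstrap process. -/
noncomputable abbrev step (s : ℕ) (G : SimpleGraph V) : SimpleGraph V :=
  bootStep (completeBipartiteGraph (Fin 2) (Fin s)) G

lemma le_step (s : ℕ) (G : SimpleGraph V) : G ≤ step s G := le_sup_left

lemma step_adj_of_twin [Finite V] {s : ℕ} (hs : 1 ≤ s) {G : SimpleGraph V} {u v w : V}
    (hw : (twin s G).Adj u w) (hv : G.Adj w v) (huv : u ≠ v) : (step s G).Adj u v :=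
  (bootStep_adj hs).2 (Or.inr ⟨huv, Or.inl ⟨w, hv, hw⟩⟩)

/-- Two twins of a common vertex become twins after one step: they inherit its neighbours. -/
lemma twin_step_of_twin_of_twin [Finite V] {s : ℕ} (hs : 1 ≤ s) {G : SimpleGraph V}
    {u w x : V} (huw : (twin s G).Adj u w) (hwx : (twin s G).Adj w x) (hux : u ≠ x) :
    (twin s (step s G)).Adj u x := by
  classical
  obtain ⟨-, S, hS, hxS⟩ := id huw
  obtain ⟨-, T, hT, hxT⟩ := id hwx
  refine ⟨hux, ?_⟩
  by_cases huT : u ∈ T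
  swap
  · refine ⟨T, hT, fun t ht => ⟨?_, le_step s G (hxT t ht).2⟩⟩
    exact step_adj_of_twin hs huw (hxT t ht).1 (fun h => huT (h ▸ ht))
  by_cases hxS' : x ∈ S
  swap
  · refine ⟨S, hS, fun t ht => ⟨le_step s G (hxS t ht).1, ?_⟩⟩
    exact step_adj_of_twin hs hwx.symm (hxS t ht).2 (fun h => hxS' (h ▸ ht))
  -- Here `u`, `w`, `x` span a triangle, and `w` replaces `x` as a common neighbour of `u`, `x`.
  have hwS : w ∉ S := fun h => (hxS w h).2.ne rfl
  refine ⟨insert w (S.erase x), ?_, ?_⟩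
  · rw [Finset.card_insert_of_notMem (fun h => hwS (Finset.mem_of_mem_erase h)),
      Finset.card_erase_of_mem hxS']
    omega
  · intro t ht
    rcases Finset.mem_insert.1 ht with rfl | ht
    · exact ⟨le_step s G (hxT u huT).1.symm, le_step s G (hxS x hxS').2.symm⟩
    · obtain ⟨htx, htS⟩ := Finset.mem_erase.1 ht
      exact ⟨le_step s G (hxS t htS).1,
        step_adj_of_twin hs hwx.symm (hxS t htS).2 (Ne.symm htx)⟩

/-- Transitivity of `R` up to equality: every connected component of `R` is a clique. -/
def IsTrans' (R : SimpleGraph V) : Prop :=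
  ∀ a b c, R.Adj a b → R.Adj b c → a ≠ c → R.Adj a c

/-- If the twin graph is a union of cliques and does not change for two steps, then two steps
suffice to fill all pairs between (or within) cliques that span an edge, and no edge is ever
added elsewhere. -/
lemma step_eq_of_twin_eq [Finite V] {s : ℕ} (hs : 1 ≤ s) {G : SimpleGraph V}
    (ht : IsTrans' (twin s G)) (h : twin s (step s (step s G)) = twin s G) :
    step s (step s (step s G)) = step s (step s G) := by
  have h1 : twin s (step s G) = twin s G :=
    le_antisymm (h ▸ twin_mono (le_step s _)) (twin_mono (le_step s _))
  set R := twin s G with hR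
  let E : V → V → Prop := fun a b => a = b ∨ R.Adj a b
  have hE : ∀ a b c, E a b → E b c → E a c := by
    rintro a b c (rfl | hab) (rfl | hbc)
    · exact Or.inl rfl
    · exact Or.inr hbc
    · exact Or.inr hab
    · by_cases hac : a = c
      · exact Or.inl hac
      · exact Or.inr (ht a b c hab hbc hac)
  -- Adjacency of classes is invariant as long as the twin graph is `R`.
  have hinv : ∀ G' : SimpleGraph V, twin s G' = R →
      (∀ u v, G'.Adj u v → ∃ u' v', E u u' ∧ E v v' ∧ G.Adj u' v') →
      ∀ u v, (step s G').Adj u v → ∃ u' v', E u u' ∧ E v v' ∧ G.Adj u' v' := by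
    intro G' hG' hP u v huv
    rcases (bootStep_adj hs).1 huv with huv | ⟨-, ⟨w, hw, huw⟩ | ⟨w, hw, hvw⟩⟩
    · exact hP u v huv
    · obtain ⟨w', v', hw', hv', hadj⟩ := hP w v hw
      exact ⟨w', v', hE _ _ _ (Or.inr (hG' ▸ huw)) hw', hv', hadj⟩
    · obtain ⟨w', u', hw', hu', hadj⟩ := hP w u hw
      exact ⟨u', w', hu', hE _ _ _ (Or.inr (hG' ▸ hvw)) hw', hadj.symm⟩
  have h3 := hinv _ h (hinv _ h1 (hinv _ rfl fun u v huv =>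
    ⟨u, v, Or.inl rfl, Or.inl rfl, huv⟩))
  refine le_antisymm ?_ (le_step s _)
  intro u v huv
  obtain ⟨u', v', hu, hv, hadj⟩ := h3 u v huv
  have hne := huv.ne
  rcases hu with rfl | hu <;> rcases hv with rfl | hv
  · exact le_step s _ (le_step s _ hadj)
  · exact (le_step s _ (step_adj_of_twin hs hv hadj.symm hne.symm)).symm
  · exact le_step s _ (step_adj_of_twin hs hu hadj hne)
  · by_cases huv' : u = v'
    · subst huv'
      by_cases hvu' : v = u'
      · subst hvu'
        exact le_step s _ (le_step s _ hadj.symm)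
      · have h4 : (step s G).Adj v u' := step_adj_of_twin hs hv hadj.symm hvu'
        exact step_adj_of_twin hs (h1.symm ▸ hu) h4.symm hne
    · have h4 : (step s G).Adj u v' := step_adj_of_twin hs hu hadj huv'
      exact (step_adj_of_twin hs (h1.symm ▸ hv) h4.symm hne.symm).symm

/-! ### Decrease of the independence number -/

lemma indepNum_anti [Finite V] {R R' : SimpleGraph V} (h : R ≤ R') :
    R'.indepNum ≤ R.indepNum := by
  obtain ⟨I, hI⟩ := R'.exists_isNIndepSet_indepNum
  rw [← hI.card_eq]
  exact IsIndepSet.card_le_indepNum (fun a ha b hb hab hadj => hI.isIndepSet ha hb hab (h hadj))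

lemma isIndepSet_insert {R : SimpleGraph V} {I : Set V} {a : V} (hI : R.IsIndepSet I)
    (ha : ∀ v ∈ I, ¬ R.Adj a v) : R.IsIndepSet (insert a I) := by
  rintro x (rfl | hx) y (rfl | hy) hxy
  · exact absurd rfl hxy
  · exact ha y hy
  · exact fun h => ha x hx h.symm
  · exact hI hx hy hxy

lemma indepNum_lt_of_insert [Finite V] {R R' : SimpleGraph V} (h : R ≤ R') {I : Finset V}
    (hI : R'.IsNIndepSet R'.indepNum I) {a : V} (ha : a ∉ I) (hadj : ∀ v ∈ I, ¬ R.Adj a v) :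
    R'.indepNum < R.indepNum := by
  classical
  have h1 : R.IsIndepSet (insert a I : Finset V) := by
    rw [Finset.coe_insert]
    exact isIndepSet_insert (fun x hx y hy hxy h' => hI.isIndepSet hx hy hxy (h h')) hadj
  have h2 := h1.card_le_indepNum
  rw [Finset.card_insert_of_notMem ha, hI.card_eq] at h2
  exact h2

lemma indepNum_lt_of_replace [Finite V] {R R' : SimpleGraph V} (h : R ≤ R') {I : Finset V}
    (hI : R'.IsNIndepSet R'.indepNum I) {v a b : V} (hv : v ∈ I) (hab : a ≠ b)
    (hnab : ¬ R.Adj a b)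
    (ha : ∀ y ∈ I, y ≠ v → y ≠ a ∧ ¬ R.Adj a y) (hb : ∀ y ∈ I, y ≠ v → y ≠ b ∧ ¬ R.Adj b y) :
    R'.indepNum < R.indepNum := by
  classical
  have h1 : R.IsIndepSet (insert a (insert b (I.erase v)) : Finset V) := by
    rw [Finset.coe_insert, Finset.coe_insert]
    refine isIndepSet_insert (isIndepSet_insert ?_ ?_) ?_
    · intro x hx y hy hxy h'
      exact hI.isIndepSet (Finset.mem_of_mem_erase hx) (Finset.mem_of_mem_erase hy) hxy (h h')
    · intro y hy
      obtain ⟨h2, h3⟩ := Finset.mem_erase.1 hy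
      exact (hb y h3 h2).2
    · intro y hy
      rcases hy with rfl | hy
      · exact hnab
      · obtain ⟨h2, h3⟩ := Finset.mem_erase.1 hy
        exact (ha y h3 h2).2
  have h2 := h1.card_le_indepNum
  have h3 : b ∉ I.erase v := fun hm => by
    obtain ⟨h2, h3⟩ := Finset.mem_erase.1 hm
    exact (hb b h3 h2).1 rfl
  have h4 : a ∉ insert b (I.erase v) := fun hm => by
    rcases Finset.mem_insert.1 hm with hm | hm
    · exact hab hm
    · obtain ⟨h2, h3⟩ := Finset.mem_erase.1 hm
      exact (ha a h3 h2).1 rfl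
  rw [Finset.card_insert_of_notMem h4, Finset.card_insert_of_notMem h3,
    Finset.card_erase_of_mem hv, hI.card_eq] at h2
  have : 0 < I.card := Finset.card_pos.2 ⟨v, hv⟩
  rw [hI.card_eq] at this
  omega

/-- If `R` is not a union of cliques and `R'` contains all pairs at distance at most three
in `R`, then the independence number drops. -/
lemma indepNum_lt_of_not_isTrans [Finite V] {R R' : SimpleGraph V} (h : R ≤ R')
    (h2 : ∀ a b c, R.Adj a b → R.Adj b c → a ≠ c → R'.Adj a c)
    (h3 : ∀ a b c d, R.Adj a b → R.Adj b c → R.Adj c d → a ≠ c → a ≠ d → R'.Adj a d)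
    (ht : ¬ IsTrans' R) : R'.indepNum < R.indepNum := by
  obtain ⟨I, hI⟩ := R'.exists_isNIndepSet_indepNum
  have hind : ∀ x ∈ I, ∀ y ∈ I, ¬ R'.Adj x y := fun x hx y hy hxy =>
    hI.isIndepSet hx hy hxy.ne hxy
  -- A member of `I` in the middle of an induced path is replaced by the two ends.
  have hmid : ∀ v ∈ I, ∀ a b, R.Adj v a → R.Adj v b → a ≠ b → ¬ R.Adj a b →
      R'.indepNum < R.indepNum := by
    intro v hv a b hva hvb hab hnab
    have aux : ∀ a, R.Adj v a → ∀ y ∈ I, y ≠ v → y ≠ a ∧ ¬ R.Adj a y := by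
      intro a hva y hy hyv
      refine ⟨?_, fun hay => hind v hv y hy (h2 v a y hva hay hyv.symm)⟩
      rintro rfl
      exact hind v hv y hy (h hva)
    exact indepNum_lt_of_replace h hI hv hab hnab (aux a hva) (aux b hvb)
  -- If a member of `I` is an end of an induced path, the other end can be added to `I`.
  have hend : ∀ v ∈ I, ∀ w b, R.Adj v w → R.Adj w b → v ≠ b → ¬ R.Adj v b →
      R'.indepNum < R.indepNum := by
    intro v hv w b hvw hwb hvb hnvb
    refine indepNum_lt_of_insert h hI (a := b)
      (fun hb => hind v hv b hb (h2 v w b hvw hwb hvb)) ?_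
    intro y hy hby
    have hyv : v ≠ y := by
      rintro rfl
      exact hnvb hby.symm
    exact hind v hv y hy (h3 v w b y hvw hwb hby hvb hyv)
  unfold IsTrans' at ht
  push Not at ht
  obtain ⟨a, w, b, haw, hwb, hab, hnab⟩ := ht
  by_contra hcon
  have hwI : w ∉ I := fun hw => hcon (hmid w hw a b haw.symm hwb hab hnab)
  have haI : a ∉ I := fun ha => hcon (hend a ha w b haw hwb hab hnab)
  have hbI : b ∉ I := fun hb => hcon (hend b hb w a hwb.symm haw.symm hab.symm
    (fun h => hnab h.symm))
  refine hcon (indepNum_lt_of_insert h hI haI ?_)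
  intro v hv hav
  have hvw : R.Adj v w := by
    by_contra hn
    exact hcon (hend v hv a w hav.symm haw (fun h => hwI (h ▸ hv)) hn)
  have hvb : R.Adj v b := by
    by_contra hn
    exact hcon (hend v hv w b hvw hwb (fun h => hbI (h ▸ hv)) hn)
  exact hcon (hmid v hv a b hav.symm hvb hab hnab)

/-- If both graphs are unions of cliques, `indepNum` counts the cliques. -/
lemma indepNum_lt_of_isTrans [Finite V] {R R' : SimpleGraph V} (h : R ≤ R') (hne : R' ≠ R)
    (ht : IsTrans' R') : R'.indepNum < R.indepNum := by
  obtain ⟨I, hI⟩ := R'.exists_isNIndepSet_indepNum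
  obtain ⟨a, b, hab, hnab⟩ : ∃ a b, R'.Adj a b ∧ ¬ R.Adj a b := by
    by_contra! hcon
    exact hne (le_antisymm (fun a b hab => hcon a b hab) h)
  by_cases hv : ∃ v ∈ I, v = a ∨ R'.Adj v a
  · obtain ⟨v, hv, hva⟩ := hv
    have hvb : v = b ∨ R'.Adj v b := by
      rcases hva with rfl | hva
      · exact Or.inr hab
      · by_cases hvb : v = b
        · exact Or.inl hvb
        · exact Or.inr (ht v a b hva hab hvb)
    have aux : ∀ c, (v = c ∨ R'.Adj v c) → ∀ y ∈ I, y ≠ v → y ≠ c ∧ ¬ R.Adj c y := by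
      intro c hc y hy hyv
      have hn := hI.isIndepSet hv hy hyv.symm
      rcases hc with rfl | hc
      · exact ⟨hyv, fun h' => hn (h h')⟩
      · exact ⟨by rintro rfl; exact hn hc, fun h' => hn (ht v c y hc (h h') hyv.symm)⟩
    exact indepNum_lt_of_replace h hI hv hab.ne hnab (aux a hva) (aux b hvb)
  · push Not at hv
    exact indepNum_lt_of_insert h hI (fun ha => (hv a ha).1 rfl)
      (fun v hv' hav => (hv v hv').2 (h hav).symm)

/-! ### The upper bound -/

lemma indepNum_lt_of_not_isTrans_twin [Finite V] {s : ℕ} (hs : 1 ≤ s) {G : SimpleGraph V}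
    (ht : ¬ IsTrans' (twin s G)) :
    (twin s (step s (step s G))).indepNum < (twin s G).indepNum := by
  have hle : ∀ G : SimpleGraph V, twin s G ≤ twin s (step s G) :=
    fun G => twin_mono (le_step s G)
  refine indepNum_lt_of_not_isTrans ((hle _).trans (hle _)) ?_ ?_ ht
  · intro a b c hab hbc hac
    exact hle _ (twin_step_of_twin_of_twin hs hab hbc hac)
  · intro a b c d hab hbc hcd hac had
    exact twin_step_of_twin_of_twin hs (twin_step_of_twin_of_twin hs hab hbc hac)
      (hle _ hcd) had

/-- Unless the process stops within two steps, the independence number of the twin graph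
drops within four. -/
lemma indepNum_lt_or_stable [Finite V] {s : ℕ} (hs : 1 ≤ s) (G : SimpleGraph V) :
    (twin s (step s (step s (step s (step s G))))).indepNum < (twin s G).indepNum ∨
      step s (step s (step s G)) = step s (step s G) := by
  have hle : ∀ G : SimpleGraph V, twin s G ≤ twin s (step s G) :=
    fun G => twin_mono (le_step s G)
  have hanti : ∀ G : SimpleGraph V,
      (twin s (step s (step s G))).indepNum ≤ (twin s G).indepNum :=
    fun G => indepNum_anti ((hle _).trans (hle _))
  by_cases ht : IsTrans' (twin s G)
  · by_cases heq : twin s (step s (step s G)) = twin s G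
    · exact Or.inr (step_eq_of_twin_eq hs ht heq)
    · left
      by_cases ht2 : IsTrans' (twin s (step s (step s G)))
      · exact (hanti _).trans_lt (indepNum_lt_of_isTrans ((hle _).trans (hle _)) heq ht2)
      · exact (indepNum_lt_of_not_isTrans_twin hs ht2).trans_le (hanti _)
  · exact Or.inl ((hanti _).trans_lt (indepNum_lt_of_not_isTrans_twin hs ht))

lemma exists_stable {s : ℕ} (hs : 1 ≤ s) {n : ℕ} (G : SimpleGraph (Fin n)) :
    ∃ t ≤ 4 * n, bootProcess (completeBipartiteGraph (Fin 2) (Fin s)) G t =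
      bootProcess (completeBipartiteGraph (Fin 2) (Fin s)) G (t + 1) := by
  by_contra! hcon
  set B := bootProcess (completeBipartiteGraph (Fin 2) (Fin s)) G with hB
  have hdrop : ∀ k ≤ n, (twin s (B (4 * k))).indepNum + k ≤ n := by
    intro k
    induction k with
    | zero =>
      intro _
      obtain ⟨I, hI⟩ := (twin s (B (4 * 0))).exists_isNIndepSet_indepNum
      rw [← hI.card_eq]
      simpa using I.card_le_univ
    | succ k ih =>
      intro hk
      have h1 := ih (by omega)
      rcases indepNum_lt_or_stable hs (B (4 * k)) with h2 | h2
      · have h3 : (twin s (B (4 * (k + 1)))).indepNum < (twin s (B (4 * k))).indepNum := h2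
        omega
      · exact absurd h2.symm (hcon (4 * k + 2) (by omega))
  have h0 := hdrop n le_rfl
  rcases Nat.eq_zero_or_pos n with rfl | hn
  · exact hcon 0 (by omega) (by ext a; exact a.elim0)
  · have h1 : (twin s (B (4 * n))).IsIndepSet ({⟨0, hn⟩} : Finset (Fin n)) := by simp
    have h2 := h1.card_le_indepNum
    simp at h2
    omega

lemma runningTime_le {s : ℕ} (hs : 1 ≤ s) {n : ℕ} (G : SimpleGraph (Fin n)) :
    runningTime (completeBipartiteGraph (Fin 2) (Fin s)) G ≤ 4 * n := by
  obtain ⟨t, ht, h⟩ := exists_stable hs G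
  exact (Nat.sInf_le (s := {t | bootProcess (completeBipartiteGraph (Fin 2) (Fin s)) G t =
    bootProcess (completeBipartiteGraph (Fin 2) (Fin s)) G (t + 1)}) h).trans ht

lemma maxRunningTime_le {s : ℕ} (hs : 1 ≤ s) (n : ℕ) :
    maxRunningTime (completeBipartiteGraph (Fin 2) (Fin s)) n ≤ 4 * n := by
  refine csSup_le' ?_
  rintro _ ⟨G, rfl⟩
  exact runningTime_le hs G

/-! ### The lower bound -/

/-- The graph on `{0, …, n - 1}` consisting of the path `0, 1, …, n - 1` and all pairs of
numbers below `k` of different parity. For `k = 2(s-1)` this is `K_{s-1,s-1}` with a pendant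
path. -/
def tadpole (n k : ℕ) : SimpleGraph (Fin n) where
  Adj u v := (u : ℕ) % 2 ≠ (v : ℕ) % 2 ∧
    (((u : ℕ) < k ∧ (v : ℕ) < k) ∨ (u : ℕ) + 1 = v ∨ (v : ℕ) + 1 = u)
  symm := ⟨fun _ _ h => ⟨h.1.symm, by have := h.2; tauto⟩⟩
  loopless := ⟨fun _ h => h.1 rfl⟩

/-- Twins of `tadpole n k` lie in its bipartite part, as path vertices share at most one
neighbour with any other vertex. -/
lemma twin_tadpole {s n k : ℕ} (hs : 3 ≤ s) {u w : Fin n}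
    (h : (twin s (tadpole n k)).Adj u w) :
    (u : ℕ) % 2 = (w : ℕ) % 2 ∧ (u : ℕ) < k ∧ (w : ℕ) < k := by
  obtain ⟨hne, S, hS, hx⟩ := h
  obtain ⟨x, hxS, y, hyS, hxy⟩ := Finset.one_lt_card.1 (show 1 < S.card by omega)
  obtain ⟨⟨h1, h1'⟩, h2, h2'⟩ := hx x hxS
  obtain ⟨⟨h3, h3'⟩, h4, h4'⟩ := hx y hyS
  have e1 : (u : ℕ) ≠ w := fun h => hne (Fin.ext h)
  have e2 : (x : ℕ) ≠ y := fun h => hxy (Fin.ext h)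
  omega

lemma step_tadpole_le {s n k : ℕ} (hs : 3 ≤ s) {G : SimpleGraph (Fin n)}
    (hG : G ≤ tadpole n k) : step s G ≤ tadpole n (k + 1) := by
  have aux : ∀ u v w : Fin n, G.Adj w v → (twin s G).Adj u w → (tadpole n (k + 1)).Adj u v := by
    intro u v w hw ht
    obtain ⟨h1, h2, h3⟩ := twin_tadpole hs (twin_mono hG ht)
    obtain ⟨h4, h5⟩ := hG hw
    refine ⟨by omega, Or.inl ⟨by omega, by omega⟩⟩
  intro u v huv
  rcases (bootStep_adj (by omega)).1 huv with h | ⟨-, ⟨w, hw, ht⟩ | ⟨w, hw, ht⟩⟩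
  · obtain ⟨h1, h2⟩ := hG h
    exact ⟨h1, by omega⟩
  · exact aux u v w hw ht
  · exact (aux v u w hw ht).symm

lemma bootProcess_tadpole_le {s n : ℕ} (hs : 3 ≤ s) (k t : ℕ) :
    bootProcess (completeBipartiteGraph (Fin 2) (Fin s)) (tadpole n k) t ≤
      tadpole n (k + t) := by
  induction t with
  | zero => exact le_rfl
  | succ t ih => exact step_tadpole_le hs ih

/-- A stable graph containing the initial graph contains the complete bipartite graph between
the even and the odd numbers. -/
lemma tadpole_le_of_stable {s n : ℕ} (hs : 3 ≤ s) (hn : 2 * (s - 1) ≤ n) {G : SimpleGraph (Fin n)}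
    (hG : tadpole n (2 * (s - 1)) ≤ G) (hst : step s G = G) {k : ℕ}
    (hk : 2 * (s - 1) ≤ k) : tadpole n k ≤ G := by
  classical
  induction k, hk using Nat.le_induction with
  | base => exact hG
  | succ k hk ih =>
    have aux : ∀ u v : Fin n, (v : ℕ) = k → (u : ℕ) < k → (u : ℕ) % 2 ≠ (v : ℕ) % 2 →
        G.Adj u v := by
      intro u v hv hu huv
      have hv' := v.2
      by_cases hu' : (u : ℕ) + 1 = k
      · exact hG ⟨huv, by omega⟩
      let w : Fin n := ⟨k - 1, by omega⟩
      have hwv : G.Adj w v := hG ⟨by simp only [w]; omega, Or.inr (Or.inl (by simp only [w]; omega))⟩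
      have hne : u ≠ v := fun h => huv (by rw [h])
      rw [← hst]
      refine step_adj_of_twin (by omega) (w := w) ⟨?_, ?_⟩ hwv hne
      · intro h
        have : (u : ℕ) = k - 1 := by rw [h]
        omega
      · -- The numbers below `2(s-1)` with the parity of `v` are `s - 1` common neighbours.
        refine ⟨Finset.univ.image (fun i : Fin (s - 1) =>
          (⟨2 * i + (v : ℕ) % 2, by omega⟩ : Fin n)), ?_, ?_⟩
        · rw [Finset.card_image_of_injective]
          · simp; omega
          · intro i j hij
            simp only [Fin.mk.injEq] at hij
            exact Fin.ext (by omega)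
        · intro x hx
          obtain ⟨i, -, rfl⟩ := Finset.mem_image.1 hx
          refine ⟨ih ⟨?_, Or.inl ⟨?_, ?_⟩⟩, ih ⟨?_, Or.inl ⟨?_, ?_⟩⟩⟩ <;>
            first | omega | (simp only [w]; omega)
    rintro u v ⟨h1, h2⟩
    by_cases hold : (tadpole n k).Adj u v
    · exact ih hold
    have hold' : ¬ (((u : ℕ) < k ∧ (v : ℕ) < k) ∨ (u : ℕ) + 1 = v ∨ (v : ℕ) + 1 = u) :=
      fun h => hold ⟨h1, h⟩
    rcases (show ((v : ℕ) = k ∧ (u : ℕ) < k) ∨ ((u : ℕ) = k ∧ (v : ℕ) < k) by omega) with h | h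
    · exact aux u v h.1 h.2 h1
    · exact (aux v u h.1 h.2 h1.symm).symm

lemma le_bootProcess {α : Type*} (H : SimpleGraph α) (G : SimpleGraph V) (t : ℕ) :
    G ≤ bootProcess H G t := by
  induction t with
  | zero => exact le_rfl
  | succ t ih => exact ih.trans le_sup_left

lemma le_runningTime_tadpole {s n : ℕ} (hs : 3 ≤ s) (hn : 4 * s ≤ n) :
    n ≤ runningTime (completeBipartiteGraph (Fin 2) (Fin s)) (tadpole n (2 * (s - 1))) +
      2 * s := by
  set T := runningTime (completeBipartiteGraph (Fin 2) (Fin s)) (tadpole n (2 * (s - 1))) with hT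
  obtain ⟨t₀, -, ht₀⟩ := exists_stable (s := s) (by omega) (tadpole n (2 * (s - 1)))
  have hst : bootProcess (completeBipartiteGraph (Fin 2) (Fin s)) (tadpole n (2 * (s - 1))) T =
      bootProcess (completeBipartiteGraph (Fin 2) (Fin s)) (tadpole n (2 * (s - 1))) (T + 1) :=
    Nat.sInf_mem (s := {t | bootProcess _ _ t = bootProcess _ _ (t + 1)}) ⟨t₀, ht₀⟩
  have h1 := (tadpole_le_of_stable hs (by omega) (le_bootProcess _ _ T) hst.symm
    (show 2 * (s - 1) ≤ n by omega)).trans (bootProcess_tadpole_le hs _ T)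
  -- The last path vertex ends up adjacent to `0` or `1`, which takes about `n` steps.
  let u : Fin n := ⟨n % 2, by omega⟩
  let v : Fin n := ⟨n - 1, by omega⟩
  have h2 : (tadpole n n).Adj u v := by
    refine ⟨?_, Or.inl ⟨u.2, v.2⟩⟩
    simp only [u, v]
    omega
  obtain ⟨h3, h4⟩ := h1 h2
  simp only [u, v] at h3 h4
  omega

end KTwoBootstrap

/-- For every `s ≥ 3`, `M_{K_{2,s}}(n) ≤ 4n + 3` for every `n`, and
`M_{K_{2,s}}(n) ≥ c·n` for some `c > 0` and all large `n`; i.e. `M_{K_{2,s}}(n) = Θ(n)`. -/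
theorem maxRunningTime_completeBipartite_two (s : ℕ) (hs : 3 ≤ s) :
    (∀ n : ℕ, maxRunningTime (completeBipartiteGraph (Fin 2) (Fin s)) n ≤ 4 * n + 3) ∧
    (∃ c : ℝ, 0 < c ∧ ∃ n₀ : ℕ, ∀ n : ℕ, n₀ ≤ n →
      c * n ≤ (maxRunningTime (completeBipartiteGraph (Fin 2) (Fin s)) n : ℝ)) := by
  refine ⟨fun n => (KTwoBootstrap.maxRunningTime_le (by omega) n).trans (by omega),
    1 / 2, by norm_num, 4 * s, fun n hn => ?_⟩
  have hle : runningTime (completeBipartiteGraph (Fin 2) (Fin s))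
      (KTwoBootstrap.tadpole n (2 * (s - 1))) ≤
      maxRunningTime (completeBipartiteGraph (Fin 2) (Fin s)) n := by
    refine le_csSup ⟨4 * n, ?_⟩ ⟨_, rfl⟩
    rintro _ ⟨G, rfl⟩
    exact KTwoBootstrap.runningTime_le (by omega) G
  have h1 := KTwoBootstrap.le_runningTime_tadpole hs hn
  have h2 : n ≤ 2 * maxRunningTime (completeBipartiteGraph (Fin 2) (Fin s)) n := by omega
  have h3 : (n : ℝ) ≤ 2 * (maxRunningTime (completeBipartiteGraph (Fin 2) (Fin s)) n : ℝ) := by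
    exact_mod_cast h2
  linarith
end
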